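/- arXiv:1710.10322 — 5 statements merged into one kernel-verified Lean document; each statement's English description precedes it below -/
import Mathlib

section
/- Let q be a prime power, let d ≥ 1 and g ≥ d+1 be integers, and let X_1, …, X_g be mutually disjoint subsets of the projective space PG(d, q) = ℙ𝔽_q^d, each of size t. If q < (g/d − 1)·t − 4, then there exists a hyperplane H in ℙ𝔽_q^d that intersects at least d+1 distinct sets among X_1, …, X_g. -/
/-!
A set `X` of `t` points meets a fraction of at least `t / (q + t)` of all hyperplanes. This is a
second moment estimate: the number of points of `X` on a random hyperplane has a known first and
second moment, because the number of hyperplanes through one point, or through two distinct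
points, does not depend on the points, and Cauchy–Schwarz bounds the support from below.

Hence a random hyperplane meets, on average, at least `∑ i, tᵢ / (q + tᵢ)` of the sets `X i`, where
`tᵢ` is the size of `X i`. For `g` sets of size `t` this is `g * t / (q + t)`, which exceeds `d`
as soon as `q < (g / d - 1) * t`.
-/

open Finset Module
open scoped LinearAlgebra.Projectivization

section DoubleCounting

variable {α ι : Type*} [DecidableEq α]

theorem sum_card_eq_sum_card_filter_mem {s : Finset ι} {S : Finset α} {A : ι → Finset α}
    (hA : ∀ i ∈ s, A i ⊆ S) :
    ∑ i ∈ s, #(A i) = ∑ x ∈ S, #{i ∈ s | x ∈ A i} := by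
  refine .trans (sum_congr rfl fun i hi ↦ ?_)
    (sum_card_bipartiteAbove_eq_sum_card_bipartiteBelow fun i x ↦ x ∈ A i)
  rw [bipartiteAbove, filter_mem_eq_inter, inter_eq_right.2 (hA i hi)]

theorem exists_lt_card_filter_mem {s : Finset ι} {S : Finset α} {A : ι → Finset α} {n : ℕ}
    (hA : ∀ i ∈ s, A i ⊆ S) (h : #S * n < ∑ i ∈ s, #(A i)) :
    ∃ x ∈ S, n < #{i ∈ s | x ∈ A i} := by
  apply exists_lt_of_sum_lt
  rwa [sum_const, smul_eq_mul, ← sum_card_eq_sum_card_filter_mem hA]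

theorem sum_sum_card_inter_eq_sum_sq_card {s : Finset ι} {S : Finset α} {A : ι → Finset α}
    (hA : ∀ i ∈ s, A i ⊆ S) :
    ∑ i ∈ s, ∑ j ∈ s, #(A i ∩ A j) = ∑ x ∈ S, #{i ∈ s | x ∈ A i} ^ 2 := by
  have hpairs : ∀ p ∈ s ×ˢ s, A p.1 ∩ A p.2 ⊆ S := fun p hp ↦
    inter_subset_left.trans (hA p.1 (mem_product.1 hp).1)
  rw [← sum_product', sum_card_eq_sum_card_filter_mem hpairs]
  refine sum_congr rfl fun x _ ↦ ?_
  simp only [mem_inter]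
  rw [filter_product (fun i ↦ x ∈ A i) (fun j ↦ x ∈ A j), card_product, sq]

theorem sq_sum_card_le_card_biUnion_mul_sum_card_inter (s : Finset ι) (A : ι → Finset α) :
    (∑ i ∈ s, #(A i)) ^ 2 ≤ #(s.biUnion A) * ∑ i ∈ s, ∑ j ∈ s, #(A i ∩ A j) := by
  have hA : ∀ i ∈ s, A i ⊆ s.biUnion A := fun i hi ↦ subset_biUnion_of_mem A hi
  rw [sum_card_eq_sum_card_filter_mem hA, sum_sum_card_inter_eq_sum_sq_card hA]
  exact sq_sum_le_card_mul_sum_sq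

theorem card_mul_sq_le_card_biUnion_mul {s : Finset ι} {A : ι → Finset α} {a c : ℕ}
    (ha : ∀ i ∈ s, #(A i) = a) (hc : ∀ i ∈ s, ∀ j ∈ s, i ≠ j → #(A i ∩ A j) ≤ c) :
    #s * a ^ 2 ≤ #(s.biUnion A) * (a + (#s - 1) * c) := by
  classical
  obtain rfl | hs := s.eq_empty_or_nonempty
  · simp
  have hrow : ∀ i ∈ s, ∑ j ∈ s, #(A i ∩ A j) ≤ a + (#s - 1) * c := fun i hi ↦ by
    rw [← add_sum_erase s _ hi, inter_self, ha i hi, ← card_erase_of_mem hi]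
    gcongr
    exact sum_le_card_nsmul _ _ _ fun j hj ↦
      hc i hi j (mem_of_mem_erase hj) (ne_of_mem_erase hj).symm
  refine le_of_mul_le_mul_left ?_ hs.card_pos
  calc #s * (#s * a ^ 2) = (∑ i ∈ s, #(A i)) ^ 2 := by
        rw [sum_congr rfl ha, sum_const, smul_eq_mul]; ring
    _ ≤ #(s.biUnion A) * ∑ i ∈ s, ∑ j ∈ s, #(A i ∩ A j) :=
        sq_sum_card_le_card_biUnion_mul_sum_card_inter s A
    _ ≤ #(s.biUnion A) * (#s * (a + (#s - 1) * c)) := by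
        gcongr
        exact sum_le_card_nsmul _ _ _ hrow
    _ = #s * (#(s.biUnion A) * (a + (#s - 1) * c)) := mul_left_comm _ _ _

end DoubleCounting

section Arithmetic

theorem pow_sub_one_mul_le {q t : ℕ} (hq : 1 ≤ q) (ht : 1 ≤ t) (k : ℕ) :
    (q ^ (k + 2) - 1) * ((q ^ (k + 1) - 1) + (t - 1) * (q ^ k - 1)) ≤
      (q + t) * (q ^ (k + 1) - 1) ^ 2 := by
  have hpow (m : ℕ) : 1 ≤ q ^ m := Nat.one_le_pow m q hq
  have hgap : (0 : ℤ) ≤ ((q * (q ^ k - 1) * (q ^ (k + 1) - 1) +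
      (t - 1) * (q ^ k * (q - 1) ^ 2) : ℕ) : ℤ) := Int.natCast_nonneg _
  push_cast [hpow, hq, ht] at hgap
  zify [hpow, ht]
  linear_combination hgap

theorem lt_mul_div_add_of_lt_div_sub_one_mul {K : Type*} [Field K] [LinearOrder K]
    [IsStrictOrderedRing K] {d g q t : K} (hd : 0 < d) (hqt : 0 < q + t)
    (h : q < (g / d - 1) * t) : d < g * (t / (q + t)) := by
  rw [← mul_div_assoc, lt_div_iff₀ hqt]
  calc d * (q + t) < d * ((g / d - 1) * t + t) := by gcongr
    _ = g * t := by field_simp; ring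

end Arithmetic

section Projective

variable {F V : Type*} [Field F] [AddCommGroup V] [Module F V]

theorem disjoint_submodule_of_ne {p r : ℙ F V} (hpr : p ≠ r) :
    Disjoint p.submodule r.submodule :=
  (Submodule.isAtom_iff_finrank_eq_one.2 p.finrank_submodule).disjoint_of_ne
    (Submodule.isAtom_iff_finrank_eq_one.2 r.finrank_submodule)
    (Projectivization.submodule_injective.ne hpr)

theorem finrank_sup_submodule_of_ne {p r : ℙ F V} (hpr : p ≠ r) :
    finrank F ↥(p.submodule ⊔ r.submodule) = 2 := by
  have h := Submodule.finrank_sup_add_finrank_inf_eq p.submodule r.submodule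
  rwa [(disjoint_submodule_of_ne hpr).eq_bot, finrank_bot, p.finrank_submodule,
    r.finrank_submodule] at h

variable [Finite F] [FiniteDimensional F V]

open scoped Classical in
/-- The nonzero linear functionals vanishing on `W`. Every hyperplane containing `W` is the kernel
of exactly `q - 1` of them, so that these finite sets count the hyperplanes through `W` up to the
constant factor `q - 1`. -/
noncomputable def hyperplaneEquations (W : Submodule F V) : Finset (Dual F V) :=
  haveI : Finite (Dual F V) := Module.finite_of_finite F
  (Set.toFinite (W.dualAnnihilator : Set (Dual F V))).toFinset.erase 0

theorem mem_hyperplaneEquations {W : Submodule F V} {f : Dual F V} :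
    f ∈ hyperplaneEquations W ↔ f ≠ 0 ∧ W ≤ LinearMap.ker f := by
  simp [hyperplaneEquations, Submodule.mem_dualAnnihilator, SetLike.le_def]

theorem hyperplaneEquations_anti {U W : Submodule F V} (h : U ≤ W) :
    hyperplaneEquations W ⊆ hyperplaneEquations U := fun _ hf ↦
  mem_hyperplaneEquations.2 <| (mem_hyperplaneEquations.1 hf).imp_right h.trans

open scoped Classical in
theorem hyperplaneEquations_inter (U W : Submodule F V) :
    hyperplaneEquations U ∩ hyperplaneEquations W = hyperplaneEquations (U ⊔ W) := by
  ext f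
  simp only [mem_inter, mem_hyperplaneEquations, sup_le_iff]
  tauto

theorem card_hyperplaneEquations_add_one {W : Submodule F V} {k : ℕ}
    (hW : finrank F W + k = finrank F V) :
    #(hyperplaneEquations W) + 1 = Nat.card F ^ k := by
  classical
  have : Finite (Dual F V) := Module.finite_of_finite F
  have hk : finrank F W.dualAnnihilator = k := by
    have := Subspace.finrank_add_finrank_dualAnnihilator_eq W
    omega
  have hcard : Nat.card W.dualAnnihilator = Nat.card F ^ k := by
    rw [natCard_eq_pow_finrank (K := F), hk]
  rw [hyperplaneEquations, card_erase_add_one (by simp), ← Set.ncard_eq_toFinset_card, ← hcard]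
  rfl

open scoped Classical in
theorem card_mul_card_hyperplaneEquations_le (hV : 1 < finrank F V) (X : Finset (ℙ F V)) :
    #X * #(hyperplaneEquations (⊥ : Submodule F V)) ≤
      (Nat.card F + #X) * #(X.biUnion fun p ↦ hyperplaneEquations p.submodule) := by
  obtain rfl | hX := X.eq_empty_or_nonempty
  · simp
  obtain ⟨k, hk⟩ := Nat.exists_eq_add_of_le' hV
  set q := Nat.card F
  have hq : 1 < q := Finite.one_lt_card
  have hall : #(hyperplaneEquations (⊥ : Submodule F V)) = q ^ (k + 2) - 1 :=
    Nat.eq_sub_of_add_eq (card_hyperplaneEquations_add_one (by simp [hk]))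
  have hpoint : ∀ p ∈ X, #(hyperplaneEquations p.submodule) = q ^ (k + 1) - 1 := fun p _ ↦
    Nat.eq_sub_of_add_eq (card_hyperplaneEquations_add_one (by
      rw [p.finrank_submodule, hk]; ring))
  have hline : ∀ p ∈ X, ∀ r ∈ X, p ≠ r →
      #(hyperplaneEquations p.submodule ∩ hyperplaneEquations r.submodule) ≤ q ^ k - 1 :=
    fun p _ r _ hpr ↦ by
      rw [hyperplaneEquations_inter]
      exact (Nat.eq_sub_of_add_eq (card_hyperplaneEquations_add_one (by
        rw [finrank_sup_submodule_of_ne hpr, hk]; ring))).le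
  have hmoment := card_mul_sq_le_card_biUnion_mul hpoint hline
  rw [hall]
  set M := #(X.biUnion fun p ↦ hyperplaneEquations p.submodule)
  have hpos : 0 < q ^ (k + 1) - 1 := Nat.sub_pos_of_lt (Nat.one_lt_pow k.succ_ne_zero hq)
  refine le_of_mul_le_mul_right ?_ (pow_pos hpos 2)
  calc #X * (q ^ (k + 2) - 1) * (q ^ (k + 1) - 1) ^ 2
      = (q ^ (k + 2) - 1) * (#X * (q ^ (k + 1) - 1) ^ 2) := by ring
    _ ≤ (q ^ (k + 2) - 1) * (M * ((q ^ (k + 1) - 1) + (#X - 1) * (q ^ k - 1))) := by gcongr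
    _ = M * ((q ^ (k + 2) - 1) * ((q ^ (k + 1) - 1) + (#X - 1) * (q ^ k - 1))) :=
        mul_left_comm _ _ _
    _ ≤ M * ((q + #X) * (q ^ (k + 1) - 1) ^ 2) :=
        Nat.mul_le_mul_left M (pow_sub_one_mul_le hq.le hX.card_pos k)
    _ = (q + #X) * M * (q ^ (k + 1) - 1) ^ 2 := by ring

end Projective

theorem exists_hyperplane_meeting_many_sets_general {F V ι : Type*} [Field F] [Finite F]
    [AddCommGroup V] [Module F V] (hV : 1 < finrank F V) [Fintype ι] (X : ι → Finset (ℙ F V))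
    {n : ℕ} (hn : (n : ℝ) < ∑ i, (#(X i) : ℝ) / (Nat.card F + #(X i))) :
    ∃ W : Submodule F V, finrank F W + 1 = finrank F V ∧
      n < Set.ncard {i | ∃ p ∈ X i, p.submodule ≤ W} := by
  classical
  have : FiniteDimensional F V := .of_finrank_pos (by omega)
  have hq : 1 < Nat.card F := Finite.one_lt_card
  let S := hyperplaneEquations (⊥ : Submodule F V)
  let A (i : ι) := (X i).biUnion fun p ↦ hyperplaneEquations p.submodule
  have hAS (i : ι) : A i ⊆ S := biUnion_subset.2 fun p _ ↦ hyperplaneEquations_anti bot_le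
  have hA (i : ι) : #S * ((#(X i) : ℝ) / (Nat.card F + #(X i))) ≤ #(A i) := by
    rw [← mul_div_assoc, div_le_iff₀ (by positivity), mul_comm, mul_comm (#(A i) : ℝ)]
    exact_mod_cast card_mul_card_hyperplaneEquations_le hV (X i)
  have hS : (0 : ℝ) < #S := by
    have hall : #S + 1 = Nat.card F ^ finrank F V := card_hyperplaneEquations_add_one (by simp)
    have := Nat.one_lt_pow (by omega) hq (n := finrank F V)
    exact_mod_cast (by omega : 0 < #S)
  have hsum : #S * n < ∑ i, #(A i) := by
    suffices (#S * n : ℝ) < ∑ i, (#(A i) : ℝ) by exact_mod_cast this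
    calc (#S * n : ℝ) < #S * ∑ i, (#(X i) : ℝ) / (Nat.card F + #(X i)) := by gcongr
      _ ≤ ∑ i, (#(A i) : ℝ) := by
        rw [mul_sum]
        exact sum_le_sum fun i _ ↦ hA i
  obtain ⟨f, hfS, hf⟩ := exists_lt_card_filter_mem (fun i _ ↦ hAS i) hsum
  have hf₀ : f ≠ 0 := (mem_hyperplaneEquations.1 hfS).1
  refine ⟨LinearMap.ker f, Dual.finrank_ker_add_one_of_ne_zero hf₀, hf.trans_eq ?_⟩
  rw [← Set.ncard_coe_finset]
  simp [A, mem_hyperplaneEquations, hf₀]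

/-- **Lemma 3.1.** Let `X 1, …, X g` be mutually disjoint subsets of the projective space
`ℙ F_q^d` (one-dimensional subspaces of `F_q^(d+1)`), each of size `t`, with `g ≥ d + 1`.
If `q < (g/d - 1) * t - 4` then there is a hyperplane (the set of projective points whose
line lies in a `d`-dimensional linear subspace `W` of `F_q^(d+1)`) meeting at least `d + 1`
distinct sets among `X 1, …, X g`. -/
theorem exists_hyperplane_meeting_many_sets
    (F : Type) [Field F] [Fintype F] (d g t : ℕ) (hd : 1 ≤ d) (hg : d + 1 ≤ g)
    (X : Fin g → Finset (Projectivization F (Fin (d + 1) → F)))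
    (hcard : ∀ i, (X i).card = t)
    (hdisj : ∀ i j, i ≠ j → Disjoint (X i) (X j))
    (hq : (Fintype.card F : ℝ) < ((g : ℝ) / (d : ℝ) - 1) * (t : ℝ) - 4) :
    ∃ W : Submodule F (Fin (d + 1) → F), Module.finrank F W = d ∧
      d + 1 ≤ Set.ncard {i : Fin g | ∃ p ∈ X i, Projectivization.submodule p ≤ W} := by
  have hsum : (d : ℝ) < ∑ i, (#(X i) : ℝ) / (Nat.card F + #(X i)) := by
    have := lt_mul_div_add_of_lt_div_sub_one_mul (q := (Fintype.card F : ℝ)) (mod_cast hd)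
      (by positivity) (hq.trans (sub_lt_self _ four_pos))
    simpa [hcard] using this
  have hrank : 1 < finrank F (Fin (d + 1) → F) := by rw [finrank_fin_fun]; omega
  obtain ⟨W, hW, hmeets⟩ := exists_hyperplane_meeting_many_sets_general hrank X hsum
  exact ⟨W, by simpa using hW, hmeets⟩
end

section
/- Let q be a prime power and let n, r, a, h be integers with r ∣ n, g = n/r, a+2 ≤ h, and h ≤ g. If there exists a maximally recoverable (n,r,h,a,q)-local reconstruction code, then q ≥ ((g/(h−1)) − 1)·binomial(r, a+1) − 4. -/
/-- The parity check matrix of an `(n, r, h, a, q)`-local reconstruction code with `g = n/r`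
local groups, given by local-parity matrices `A i` (in block-diagonal position) and
heavy-parity matrices `B i`. Rows are indexed by `(Fin g × Fin a) ⊕ Fin h`
(local parity rows first, then the `h` heavy rows) and columns by `Fin g × Fin r`
(the `i`-th local group consists of the columns with first coordinate `i`). -/
def lrcParityCheck (F : Type) [Field F] (g r a h : ℕ)
    (A : Fin g → Matrix (Fin a) (Fin r) F)
    (B : Fin g → Matrix (Fin h) (Fin r) F) :
    Matrix ((Fin g × Fin a) ⊕ Fin h) (Fin g × Fin r) F :=
  fun ρ c =>
    Sum.elim (fun p : Fin g × Fin a => if p.1 = c.1 then A p.1 p.2 c.2 else 0)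
      (fun j : Fin h => B c.1 j c.2) ρ

/-- `A, B` define a maximally recoverable LRC:  every `a × a` minor of each `A i` is
nonzero (stated: any `a` columns of `A i` are linearly independent), and for every set `E`
of `a * g + h` columns containing at least `a` columns from each local group, the
corresponding columns of the parity check matrix are linearly independent (equivalently,
the square submatrix of the parity check matrix on the columns of `E` is invertible). -/
def IsMRLRC (F : Type) [Field F] (g r a h : ℕ)
    (A : Fin g → Matrix (Fin a) (Fin r) F)
    (B : Fin g → Matrix (Fin h) (Fin r) F) : Prop :=
  (∀ i : Fin g, ∀ S : Finset (Fin r), S.card = a →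
      LinearIndependent F (fun c : {x // x ∈ S} => fun j : Fin a => A i j c.1)) ∧
  (∀ E : Finset (Fin g × Fin r), E.card = a * g + h →
      (∀ i : Fin g, a ≤ (E.filter (fun x => x.1 = i)).card) →
      LinearIndependent F
        (fun c : {x // x ∈ E} => fun ρ => lrcParityCheck F g r a h A B ρ c.1))

/-- There is a maximally recoverable `(n = g * r, r, h, a, q)`-local reconstruction code
with `g` local groups each of size `r`, over the field with `q` elements. -/
def ExistsMRLRC (g r h a q : ℕ) : Prop :=
  ∃ (F : Type) (_ : Field F) (_ : Fintype F),
    Fintype.card F = q ∧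
      ∃ (A : Fin g → Matrix (Fin a) (Fin r) F) (B : Fin g → Matrix (Fin h) (Fin r) F),
        IsMRLRC F g r a h A B

/-!
Every `(a + 1)`-subset of the `i`-th local group is the support of a word `k` with `A i *ᵥ k = 0`.
The heavy syndromes `B i *ᵥ k` of these words are `t = r.choose (a + 1)` points of `F ^ h` for each
group. A nonzero codeword `v` of a maximally recoverable code has excess `∑ i, (|supp (v i)| - a)`
(truncated subtraction) greater than `h`. Hence any two points of one group are linearly
independent, which is where `a + 2 ≤ h` enters, and so are any `h` points of distinct groups.

By the second property, a nonzero linear functional on `F ^ h` vanishes at a point of at most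
`h - 1` groups. By the first, the events that a uniformly random functional vanishes at the points
of one group are pairwise independent, so the Cauchy–Schwarz inequality for the number of zeros
shows that at least a fraction `t / (q + t - 1)` of all functionals vanish at a point of that group.
Counting pairs of a functional and a group in both ways gives `g * t ≤ (h - 1) * (q + t)`.
-/

lemma exists_finset_card_eq_of_sum_excess_le {κ α : Type*} [Fintype κ] [DecidableEq κ] [Fintype α]
    {a h : ℕ} (hn : a * Fintype.card κ + h ≤ Fintype.card κ * Fintype.card α) {s : κ → Set α}
    (hs : ∑ i, ((s i).ncard - a) ≤ h) :
    ∃ E : Finset (κ × α), E.card = a * Fintype.card κ + h ∧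
      (∀ i, a ≤ (E.filter fun x => x.1 = i).card) ∧ ∀ i, ∀ c ∈ s i, (i, c) ∈ E := by
  classical
  have hW (i : κ) : ∃ W : Finset α, s i ⊆ W ∧ W.card = a + ((s i).ncard - a) := by
    have hκ : 0 < Fintype.card κ := Fintype.card_pos_iff.2 ⟨i⟩
    have haα : a ≤ Fintype.card α := by nlinarith
    have hsα : (s i).ncard ≤ Fintype.card α := by simpa using Set.ncard_le_card (s i)
    obtain ⟨W, hsub, hcard⟩ := Finset.exists_superset_card_eq (s := (s i).toFinset)
      (n := a + ((s i).ncard - a)) (by rw [← Set.ncard_eq_toFinset_card']; omega) (by omega)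
    exact ⟨W, Set.toFinset_subset.1 hsub, hcard⟩
  choose W hsW hWcard using hW
  let E₀ : Finset (κ × α) := (Finset.univ.sigma W).map (Equiv.sigmaEquivProd κ α).toEmbedding
  have hE₀ : E₀.card ≤ a * Fintype.card κ + h := by
    simp only [E₀, Finset.card_map, Finset.card_sigma, hWcard, Finset.sum_add_distrib,
      Finset.sum_const, Finset.card_univ, smul_eq_mul]
    linarith
  obtain ⟨E, hE₀E, hEcard⟩ := Finset.exists_superset_card_eq hE₀ (by simpa using hn)
  have hWE (i : κ) (c : α) (hc : c ∈ W i) : (i, c) ∈ E := hE₀E (by simpa [E₀] using hc)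
  refine ⟨E, hEcard, fun i => ?_, fun i c hc => hWE i c (hsW i hc)⟩
  calc a ≤ ((W i).map (Function.Embedding.sectR i α)).card := by
        rw [Finset.card_map, hWcard]
        exact Nat.le_add_right _ _
    _ ≤ (E.filter fun x => x.1 = i).card := by
        refine Finset.card_le_card fun x hx => ?_
        obtain ⟨c, hc, rfl⟩ := Finset.mem_map.1 hx
        exact Finset.mem_filter.2 ⟨hWE i c hc, rfl⟩

section Functionals

open Finset Module

lemma sum_card_filter_add_le_of_forall_ne {α κ : Type*} [Fintype α] [Fintype κ] {m : ℕ} (a₀ : α)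
    {r : κ → α → Prop} [∀ i a, Decidable (r i a)] (hm : ∀ a ≠ a₀, #{i | r i a} ≤ m) :
    ∑ i, #{a | r i a} + m ≤ Fintype.card κ + m * Fintype.card α := by
  classical
  have hdouble : ∑ i, #{a | r i a} = ∑ a, #{i | r i a} :=
    sum_card_bipartiteAbove_eq_sum_card_bipartiteBelow r
  have hne : ∑ a ∈ univ.erase a₀, #{i | r i a} ≤ #(univ.erase a₀) * m :=
    sum_le_card_nsmul _ _ _ fun a ha => hm a (ne_of_mem_erase ha)
  calc ∑ i, #{a | r i a} + m
      = #{i | r i a₀} + ∑ a ∈ univ.erase a₀, #{i | r i a} + m := by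
        rw [hdouble, add_sum_erase _ (fun a => #{i | r i a}) (mem_univ a₀)]
    _ ≤ Fintype.card κ + #(univ.erase a₀) * m + m := by
        gcongr
        exact card_le_univ _
    _ = Fintype.card κ + m * Fintype.card α := by
        rw [← card_univ (α := α), ← card_erase_add_one (mem_univ a₀)]
        ring

lemma mul_le_mul_add_of_double_count {g m q t N Q : ℕ} (hq : 2 ≤ q) (ht : 1 ≤ t) (hQ : q ^ 2 ≤ Q)
    (hlower : g * (t * Q) + N ≤ N * (q + t)) (hupper : N + m ≤ g + m * Q) :
    g * t ≤ m * (q + t) := by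
  zify at *
  have htQ : (t : ℤ) * q ^ 2 ≤ t * Q := by gcongr
  have hpos : 0 < (t : ℤ) * Q - (q + t - 1) := by
    nlinarith [mul_nonneg (sub_nonneg.2 ht) (show (0 : ℤ) ≤ q ^ 2 - 1 by nlinarith)]
  have hcmp : (t : ℤ) * ((Q - 1) * (q + t - 1)) ≤ (q + t) * (t * Q - (q + t - 1)) := by
    nlinarith [mul_nonneg (sub_nonneg.2 ht) (mul_nonneg (sub_nonneg.2 hq) (Int.natCast_nonneg q))]
  refine le_of_mul_le_mul_right ?_ hpos
  calc (g : ℤ) * t * (t * Q - (q + t - 1))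
      ≤ m * (t * ((Q - 1) * (q + t - 1))) := by
        nlinarith [mul_le_mul_of_nonneg_right hupper (show (0 : ℤ) ≤ q + t - 1 by linarith)]
    _ ≤ m * (q + t) * (t * Q - (q + t - 1)) := by
        rw [mul_assoc (m : ℤ)]
        gcongr

variable {F V ι : Type*} [Field F] [AddCommGroup V] [Module F V] [FiniteDimensional F V]

lemma natCard_dual_eq_pow_finrank :
    Nat.card (Dual F V) = Nat.card F ^ finrank F V := by
  rw [natCard_eq_pow_finrank (K := F) (V := Dual F V), Subspace.dual_finrank_eq]

lemma ncard_vanishing_mul_pow_ncard {p : ι → V} {S : Set ι} (hS : LinearIndepOn F p S) :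
    {φ : Dual F V | ∀ s ∈ S, φ (p s) = 0}.ncard * Nat.card F ^ S.ncard = Nat.card (Dual F V) := by
  have : Finite S := LinearIndependent.finite hS
  have := Fintype.ofFinite S
  let W : Submodule F V := Submodule.span F (Set.range fun s : S => p s)
  have hW : finrank F W = S.ncard := by
    rw [finrank_span_eq_card hS, ← Nat.card_eq_fintype_card, Nat.card_coe_set_eq]
  have hann : {φ : Dual F V | ∀ s ∈ S, φ (p s) = 0} = (W.dualAnnihilator : Set (Dual F V)) := by
    rw [Submodule.coe_dualAnnihilator_span]
    ext φ
    simp [Set.subset_def]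
  rw [hann, ← Nat.card_coe_set_eq, SetLike.coe_sort_coe,
    natCard_eq_pow_finrank (K := F) (V := W.dualAnnihilator), ← hW, ← pow_add, add_comm,
    Subspace.finrank_add_finrank_dualAnnihilator_eq, natCard_dual_eq_pow_finrank]

section Counting

variable [Fintype (Dual F V)] [DecidableEq F]

lemma card_vanishing_mul_card {x : V} (hx : x ≠ 0) :
    #{φ : Dual F V | φ x = 0} * Nat.card F = Nat.card (Dual F V) := by
  simpa [Set.ncard_eq_toFinset_card'] using ncard_vanishing_mul_pow_ncard (p := id) (S := {x})
    ((linearIndepOn_singleton_iff F).2 hx)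

lemma card_vanishing_pair_mul_card_sq [DecidableEq ι] {p : ι → V} {s u : ι}
    (hp : LinearIndepOn F p {s, u}) :
    #{φ : Dual F V | φ (p s) = 0 ∧ φ (p u) = 0} * Nat.card F ^ 2
      = Nat.card (Dual F V) * if s = u then Nat.card F else 1 := by
  rcases eq_or_ne s u with rfl | hsu
  · have hs : p s ≠ 0 := by simpa using hp
    simp only [and_self, if_true, sq, ← mul_assoc, card_vanishing_mul_card hs]
  · have h := ncard_vanishing_mul_pow_ncard hp
    rw [Set.ncard_pair hsu] at h
    simpa [hsu, Set.ncard_eq_toFinset_card'] using h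

variable [Fintype ι] {p : ι → V}

lemma sum_card_zeros_mul_card (hp : ∀ s, p s ≠ 0) :
    (∑ φ : Dual F V, #{s | φ (p s) = 0}) * Nat.card F
      = Fintype.card ι * Nat.card (Dual F V) := by
  calc (∑ φ : Dual F V, #{s | φ (p s) = 0}) * Nat.card F
      = (∑ s, #{φ : Dual F V | φ (p s) = 0}) * Nat.card F := by
        congr 1
        exact sum_card_bipartiteAbove_eq_sum_card_bipartiteBelow fun (φ : Dual F V) s => φ (p s) = 0
    _ = Fintype.card ι * Nat.card (Dual F V) := by
        simp only [sum_mul, card_vanishing_mul_card (hp _), sum_const, card_univ, smul_eq_mul]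

lemma sum_card_zeros_sq_mul_card_sq (hp : ∀ s u, LinearIndepOn F p {s, u}) :
    (∑ φ : Dual F V, #{s | φ (p s) = 0} ^ 2) * Nat.card F ^ 2
        + Fintype.card ι * Nat.card (Dual F V)
      = Fintype.card ι * Nat.card (Dual F V) * (Nat.card F + Fintype.card ι) := by
  classical
  have hdouble : ∑ φ : Dual F V, #{s | φ (p s) = 0} ^ 2
      = ∑ x : ι × ι, #{φ : Dual F V | φ (p x.1) = 0 ∧ φ (p x.2) = 0} := by
    simp only [sq, ← card_product, ← filter_product, univ_product_univ]
    exact sum_card_bipartiteAbove_eq_sum_card_bipartiteBelow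
      fun (φ : Dual F V) (x : ι × ι) => φ (p x.1) = 0 ∧ φ (p x.2) = 0
  have hrow (s : ι) : (∑ u, if s = u then Nat.card F else 1) + 1
      = Nat.card F + Fintype.card ι := by
    rw [← add_sum_erase _ _ (mem_univ s), if_pos rfl,
      sum_congr rfl fun u hu => if_neg (ne_of_mem_erase hu).symm, sum_const, smul_eq_mul, mul_one,
      add_assoc, card_erase_add_one (mem_univ s), card_univ]
  calc (∑ φ : Dual F V, #{s | φ (p s) = 0} ^ 2) * Nat.card F ^ 2
        + Fintype.card ι * Nat.card (Dual F V)
      = ∑ s : ι, Nat.card (Dual F V) * ((∑ u, if s = u then Nat.card F else 1) + 1) := by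
        simp only [hdouble, sum_mul, card_vanishing_pair_mul_card_sq (hp _ _),
          Fintype.sum_prod_type, ← mul_sum, sum_add_distrib, sum_const, card_univ, smul_eq_mul]
        ring
    _ = Fintype.card ι * Nat.card (Dual F V) * (Nat.card F + Fintype.card ι) := by
        simp only [hrow, sum_const, card_univ, smul_eq_mul, mul_assoc]

/-- At least a fraction `t / (q + t - 1)` of the functionals vanish at one of the `t` points, stated
without subtraction or division. -/
lemma card_mul_card_dual_add_card_le (hp : ∀ s u, LinearIndepOn F p {s, u}) :
    Fintype.card ι * Nat.card (Dual F V) + #{φ : Dual F V | ∃ s, φ (p s) = 0}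
      ≤ #{φ : Dual F V | ∃ s, φ (p s) = 0} * (Nat.card F + Fintype.card ι) := by
  rcases isEmpty_or_nonempty ι with hι | hι
  · simp
  let Z (φ : Dual F V) : ℕ := #{s | φ (p s) = 0}
  let N : Finset (Dual F V) := {φ | ∃ s, φ (p s) = 0}
  have hZ (φ : Dual F V) (hφ : φ ∉ N) : Z φ = 0 := by
    simpa [N, Z, filter_eq_empty_iff] using hφ
  have hS1 : (∑ φ ∈ N, Z φ) * Nat.card F = Fintype.card ι * Nat.card (Dual F V) := by
    rw [sum_subset (subset_univ N) fun φ _ hφ => hZ φ hφ]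
    exact sum_card_zeros_mul_card fun s => by simpa using hp s s
  have hS2 : (∑ φ ∈ N, Z φ ^ 2) * Nat.card F ^ 2 + Fintype.card ι * Nat.card (Dual F V)
      = Fintype.card ι * Nat.card (Dual F V) * (Nat.card F + Fintype.card ι) := by
    rw [sum_subset (subset_univ N) fun φ _ hφ => by rw [hZ φ hφ, zero_pow two_ne_zero]]
    exact sum_card_zeros_sq_mul_card_sq hp
  have hCS : (∑ φ ∈ N, Z φ) ^ 2 ≤ #N * ∑ φ ∈ N, Z φ ^ 2 := sq_sum_le_card_mul_sum_sq
  set T := Fintype.card ι * Nat.card (Dual F V)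
  have hT : 0 < T := mul_pos Fintype.card_pos Nat.card_pos
  refine le_of_mul_le_mul_left ?_ hT
  calc T * (T + #N)
      = (∑ φ ∈ N, Z φ) ^ 2 * Nat.card F ^ 2 + #N * T := by rw [← mul_pow, hS1]; ring
    _ ≤ #N * (∑ φ ∈ N, Z φ ^ 2) * Nat.card F ^ 2 + #N * T := by gcongr
    _ = T * (#N * (Nat.card F + Fintype.card ι)) := by rw [mul_assoc, ← mul_add, hS2]; ring

end Counting

lemma card_exists_apply_eq_zero_lt [DecidableEq F] [Fintype ι] [Nonempty ι] {κ : Type*} [Fintype κ]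
    {p : κ → ι → V} (hp : ∀ (I : Finset κ) (s : κ → ι), #I = finrank F V →
      LinearIndepOn F (fun i => p i (s i)) I)
    {φ : Dual F V} (hφ : φ ≠ 0) :
    #{i | ∃ s, φ (p i s) = 0} < finrank F V := by
  by_contra! hcard
  obtain ⟨I, hI, hIcard⟩ := exists_subset_card_eq hcard
  have hzero (i : κ) (hi : i ∈ I) : ∃ s, φ (p i s) = 0 := (mem_filter.1 (hI hi)).2
  choose! s hs using hzero
  have hspan := (hp I s hIcard).span_eq_top_of_card_eq_finrank' (by simpa using hIcard)
  exact hφ (LinearMap.ext_on_range hspan fun i => by simpa using hs i i.2)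

theorem card_mul_card_le_of_linearIndepOn [Finite F] [Fintype ι] {κ : Type*} [Fintype κ]
    {p : κ → ι → V} (hV : 2 ≤ finrank F V) (hpair : ∀ i s u, LinearIndepOn F (p i) {s, u})
    (htrans : ∀ (I : Finset κ) (s : κ → ι), #I = finrank F V →
      LinearIndepOn F (fun i => p i (s i)) I) :
    Fintype.card κ * Fintype.card ι ≤ (finrank F V - 1) * (Nat.card F + Fintype.card ι) := by
  classical
  have : Finite (Dual F V) := Module.finite_of_finite F
  have := Fintype.ofFinite (Dual F V)
  rcases isEmpty_or_nonempty ι with hι | hι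
  · simp
  have hQ : Nat.card F ^ 2 ≤ Nat.card (Dual F V) := by
    rw [natCard_dual_eq_pow_finrank]
    exact Nat.pow_le_pow_right Nat.card_pos hV
  let N : ℕ := ∑ i, #{φ : Dual F V | ∃ s, φ (p i s) = 0}
  have hlower : Fintype.card κ * (Fintype.card ι * Nat.card (Dual F V)) + N
      ≤ N * (Nat.card F + Fintype.card ι) := by
    simpa only [N, sum_add_distrib, ← sum_mul, sum_const, card_univ, smul_eq_mul, mul_assoc] using
      sum_le_sum fun i (_ : i ∈ univ) => card_mul_card_dual_add_card_le (hpair i)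
  have hupper : N + (finrank F V - 1)
      ≤ Fintype.card κ + (finrank F V - 1) * Nat.card (Dual F V) := by
    rw [Nat.card_eq_fintype_card]
    exact sum_card_filter_add_le_of_forall_ne 0 fun φ hφ =>
      Nat.le_sub_one_of_lt (card_exists_apply_eq_zero_lt htrans hφ)
  exact mul_le_mul_add_of_double_count Finite.one_lt_card Fintype.card_pos hQ hlower hupper

end Functionals

section LinearCodes

open Finset
open scoped Matrix

lemma eq_zero_of_linearIndepOn_col {F m n : Type*} [Field F] [Fintype n] {M : Matrix m n F}
    {S : Finset n} (hS : LinearIndepOn F M.col S) {v : n → F} (hv : M *ᵥ v = 0)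
    (hsupp : Function.support v ⊆ S) : v = 0 := by
  classical
  have hsum : ∑ c ∈ S, v c • M.col c = 0 := by
    rw [sum_subset (subset_univ S) fun c _ hc => by
      rw [Function.notMem_support.1 fun h => hc (hsupp h), zero_smul]]
    simpa only [Matrix.mulVec_eq_sum, op_smul_eq_smul] using! hv
  funext c
  by_contra hc
  exact hc (linearIndepOn_finset_iff.1 hS v hsum c (hsupp hc))

lemma exists_mulVec_eq_zero_support_eq {F m n : Type*} [Field F] [Fintype m] [Fintype n]
    {M : Matrix m n F} (hM : ∀ S : Finset n, #S = Fintype.card m → LinearIndepOn F M.col S)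
    {S : Finset n} (hS : #S = Fintype.card m + 1) :
    ∃ k : n → F, M *ᵥ k = 0 ∧ Function.support k = S := by
  classical
  have hdep : ¬ LinearIndepOn F M.col S := fun h => by
    simpa [hS] using LinearIndependent.fintype_card_le_finrank h
  rw [linearIndepOn_finset_iff] at hdep
  push Not at hdep
  obtain ⟨f, hf, c₀, hc₀, hfc₀⟩ := hdep
  let k : n → F := fun c => if c ∈ S then f c else 0
  have hkS : Function.support k ⊆ S := fun c hc => by
    by_contra hcS
    exact hc (if_neg hcS)
  have hk : M *ᵥ k = 0 := by
    simp only [Matrix.mulVec_eq_sum, op_smul_eq_smul, k, ite_smul, zero_smul, sum_ite_mem,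
      univ_inter]
    exact hf
  refine ⟨k, hk, hkS.antisymm fun c hc hkc => hfc₀ ?_⟩
  have hkerase : Function.support k ⊆ (S.erase c : Finset n) := fun x hx =>
    mem_coe.2 <| mem_erase.2 ⟨fun hxc => hx (hxc ▸ hkc), hkS hx⟩
  have hindep := hM (S.erase c) (by rw [card_erase_of_mem hc, hS, Nat.add_sub_cancel])
  simpa [k, hc₀] using congrFun (eq_zero_of_linearIndepOn_col hindep hk hkerase) c₀

lemma linearIndepOn_pair_of_support_eq {F n ι : Type*} [Field F] {S : ι → Finset n}
    {k : ι → n → F} (hk : ∀ i, Function.support (k i) = S i) {d : ℕ} (hS : ∀ i, #(S i) = d + 1)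
    (hinj : Function.Injective S) (i j : ι) : LinearIndepOn F k {i, j} := by
  have hsub (i j : ι) (hij : i ≠ j) : ∃ x, k i x ≠ 0 ∧ k j x = 0 := by
    obtain ⟨x, hxi, hxj⟩ := not_subset.1 fun hsub =>
      hij (hinj (eq_of_subset_of_card_le hsub (by rw [hS, hS])))
    refine ⟨x, ?_, ?_⟩
    · exact (hk i).symm.subset hxi
    · exact Function.notMem_support.1 fun h => hxj ((hk j).subset h)
  rcases eq_or_ne i j with rfl | hij
  · have hne : k i ≠ 0 := by
      rw [← Function.support_nonempty_iff, hk, coe_nonempty, ← card_pos, hS]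
      exact d.succ_pos
    simpa using hne
  · refine (LinearIndepOn.pair_iff k hij).2 fun b c hbc => ?_
    obtain ⟨x, hxi, hxj⟩ := hsub i j hij
    obtain ⟨y, hyj, hyi⟩ := hsub j i hij.symm
    constructor
    · simpa [hxi, hxj] using congrFun hbc x
    · simpa [hyi, hyj] using congrFun hbc y

end LinearCodes

section LRC

open Finset Module
open scoped Matrix

variable {F : Type} [Field F] {g r a h : ℕ} {A : Fin g → Matrix (Fin a) (Fin r) F}
  {B : Fin g → Matrix (Fin h) (Fin r) F}

lemma lrcParityCheck_mulVec_eq_zero {v : Fin g → Fin r → F} (hA : ∀ i, A i *ᵥ v i = 0)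
    (hB : ∑ i, B i *ᵥ v i = 0) :
    lrcParityCheck F g r a h A B *ᵥ (fun x => v x.1 x.2) = 0 := by
  funext ρ
  simp only [Matrix.mulVec, dotProduct, Fintype.sum_prod_type]
  rcases ρ with ⟨i, j⟩ | j
  · simpa [lrcParityCheck, Matrix.mulVec, dotProduct] using congrFun (hA i) j
  · simpa [lrcParityCheck, Matrix.mulVec, dotProduct] using congrFun hB j

lemma IsMRLRC.eq_zero_of_sum_excess_le (hMR : IsMRLRC F g r a h A B) (hn : a * g + h ≤ g * r)
    {v : Fin g → Fin r → F} (hA : ∀ i, A i *ᵥ v i = 0) (hB : ∑ i, B i *ᵥ v i = 0)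
    (hv : ∑ i, ((Function.support (v i)).ncard - a) ≤ h) : v = 0 := by
  obtain ⟨E, hEcard, hEgroup, hvE⟩ := exists_finset_card_eq_of_sum_excess_le
    (κ := Fin g) (α := Fin r) (by simpa using hn) hv
  have hindep : LinearIndepOn F (lrcParityCheck F g r a h A B).col E :=
    hMR.2 E (by simpa using hEcard) hEgroup
  have hv0 := eq_zero_of_linearIndepOn_col hindep (lrcParityCheck_mulVec_eq_zero hA hB)
    fun x hx => hvE x.1 x.2 hx
  funext i c
  exact congrFun hv0 (i, c)

lemma IsMRLRC.eq_zero_of_ncard_support_le (hMR : IsMRLRC F g r a h A B) (hn : a * g + h ≤ g * r)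
    (i : Fin g) {x : Fin r → F} (hA : A i *ᵥ x = 0) (hB : B i *ᵥ x = 0)
    (hx : (Function.support x).ncard ≤ a + h) : x = 0 := by
  have hmul {m : ℕ} (M : Fin g → Matrix (Fin m) (Fin r) F) (hM : M i *ᵥ x = 0) (j : Fin g) :
      M j *ᵥ ((Pi.single i x : Fin g → Fin r → F) j) = 0 := by
    rcases eq_or_ne j i with rfl | hj
    · simpa using hM
    · simp [hj]
  have hv : (Pi.single i x : Fin g → Fin r → F) = 0 := by
    refine hMR.eq_zero_of_sum_excess_le hn (hmul A hA) (sum_eq_zero fun j _ => hmul B hB j) ?_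
    rw [Fintype.sum_eq_single i fun j hj => by simp [hj], Pi.single_eq_same]
    omega
  exact Pi.single_eq_zero_iff.1 hv

lemma IsMRLRC.linearIndepOn_mulVec_same_group (hMR : IsMRLRC F g r a h A B)
    (hn : a * g + h ≤ g * r) (i : Fin g) {ι : Type*} {k : ι → Fin r → F} {T : Set ι}
    (hA : ∀ s ∈ T, A i *ᵥ k s = 0) (hk : LinearIndepOn F k T) {W : Set (Fin r)}
    (hkW : ∀ s ∈ T, Function.support (k s) ⊆ W) (hW : W.ncard ≤ a + h) :
    LinearIndepOn F (fun s => B i *ᵥ k s) T := by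
  refine LinearIndependent.map hk (f := (B i).mulVecLin)
    (Submodule.disjoint_def.2 fun x hx => ?_)
  have hxAW : A i *ᵥ x = 0 ∧ Function.support x ⊆ W := by
    induction hx using Submodule.span_induction with
    | mem x hx =>
      obtain ⟨s, rfl⟩ := hx
      exact ⟨hA s s.2, hkW s s.2⟩
    | zero => simp
    | add x y _ _ hx hy =>
      exact ⟨by rw [Matrix.mulVec_add, hx.1, hy.1, add_zero],
        (Function.support_add x y).trans (Set.union_subset hx.2 hy.2)⟩
    | smul c x _ hx =>
      exact ⟨by rw [Matrix.mulVec_smul, hx.1, smul_zero],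
        (Function.support_const_smul_subset c x).trans hx.2⟩
  exact fun hBx => hMR.eq_zero_of_ncard_support_le hn i hxAW.1 hBx
    ((Set.ncard_le_ncard hxAW.2).trans hW)

lemma IsMRLRC.linearIndepOn_mulVec_distinct_groups (hMR : IsMRLRC F g r a h A B)
    (hn : a * g + h ≤ g * r) {k : Fin g → Fin r → F} {I : Finset (Fin g)}
    (hA : ∀ i ∈ I, A i *ᵥ k i = 0) (hk : ∀ i ∈ I, k i ≠ 0)
    (hsupp : ∀ i ∈ I, (Function.support (k i)).ncard ≤ a + 1) (hI : #I ≤ h) :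
    LinearIndepOn F (fun i => B i *ᵥ k i) I := by
  refine linearIndepOn_finset_iff.2 fun c hc => ?_
  let v (i : Fin g) : Fin r → F := if i ∈ I then c i • k i else 0
  have hvA (i : Fin g) : A i *ᵥ v i = 0 := by
    by_cases hi : i ∈ I <;> simp [v, hi, Matrix.mulVec_smul, hA]
  have hvB : ∑ i, B i *ᵥ v i = 0 := by
    rw [← hc, ← sum_subset (subset_univ I) fun i _ hi => by simp [v, hi]]
    exact sum_congr rfl fun i hi => by simp [v, hi, Matrix.mulVec_smul]
  have hexcess : ∑ i, ((Function.support (v i)).ncard - a) ≤ h :=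
    calc ∑ i, ((Function.support (v i)).ncard - a) ≤ ∑ i, if i ∈ I then 1 else 0 := by
          refine sum_le_sum fun i _ => ?_
          by_cases hi : i ∈ I
          · have := Set.ncard_le_ncard (Function.support_const_smul_subset (c i) (k i))
            have := hsupp i hi
            simp only [v, hi, if_true]
            omega
          · simp [v, hi]
      _ ≤ h := by simpa using hI
  have hv := hMR.eq_zero_of_sum_excess_le hn hvA hvB hexcess
  intro i hi
  have hvi : c i • k i = 0 := by simpa [v, hi] using congrFun hv i
  exact (smul_eq_zero.1 hvi).resolve_right (hk i hi)

theorem IsMRLRC.card_mul_choose_le [Finite F] (hMR : IsMRLRC F g r a h A B)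
    (hn : a * g + h ≤ g * r) (hah : a + 2 ≤ h) :
    g * r.choose (a + 1) ≤ (h - 1) * (Nat.card F + r.choose (a + 1)) := by
  let ι := {S : Finset (Fin r) // #S = a + 1}
  have hword (i : Fin g) (S : ι) : ∃ k, A i *ᵥ k = 0 ∧ Function.support k = S.1 :=
    exists_mulVec_eq_zero_support_eq (fun T hT => hMR.1 i T (hT.trans (Fintype.card_fin a)))
      (S.2.trans (by rw [Fintype.card_fin]))
  choose k hkA hksupp using hword
  have hkcard (i : Fin g) (S : ι) : (Function.support (k i S)).ncard = a + 1 := by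
    rw [hksupp, Set.ncard_coe_finset, S.2]
  have hk0 (i : Fin g) (S : ι) : k i S ≠ 0 := fun h => by
    simpa [h] using hkcard i S
  have hpair (i : Fin g) (S T : ι) : LinearIndepOn F (fun S => B i *ᵥ k i S) {S, T} := by
    refine hMR.linearIndepOn_mulVec_same_group hn i (fun S _ => hkA i S)
      (linearIndepOn_pair_of_support_eq (hksupp i) (fun S => S.2) Subtype.val_injective S T)
      (W := Function.support (k i S) ∪ Function.support (k i T)) ?_ ?_
    · rintro U (rfl | rfl)
      exacts [Set.subset_union_left, Set.subset_union_right]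
    have := Set.ncard_union_le (Function.support (k i S)) (Function.support (k i T))
    rw [hkcard, hkcard] at this
    omega
  have htrans (I : Finset (Fin g)) (s : Fin g → ι) (hI : #I = finrank F (Fin h → F)) :
      LinearIndepOn F (fun i => B i *ᵥ k i (s i)) I :=
    hMR.linearIndepOn_mulVec_distinct_groups hn (fun i _ => hkA i (s i)) (fun i _ => hk0 i (s i))
      (fun i _ => (hkcard i (s i)).le) (by simpa using hI.le)
  have hh : 2 ≤ finrank F (Fin h → F) := by
    rw [finrank_fin_fun]
    omega
  simpa [ι] using card_mul_card_le_of_linearIndepOn hh hpair htrans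

end LRC

theorem mrlrc_field_size_lower_bound_h_ge_a_add_two_general {g r h a q : ℕ} (hah : a + 2 ≤ h)
    (hex : ExistsMRLRC g r h a q) :
    ((g : ℝ) / ((h : ℝ) - 1) - 1) * (r.choose (a + 1) : ℝ) ≤ (q : ℝ) := by
  obtain ⟨F, _, _, rfl, A, B, hMR⟩ := hex
  have hh : (0 : ℝ) < (h : ℝ) - 1 := by
    rw [sub_pos, Nat.one_lt_cast]
    omega
  suffices (g : ℝ) * r.choose (a + 1) ≤ (h - 1) * (Fintype.card F + r.choose (a + 1)) by
    rw [sub_mul, one_mul, div_mul_eq_mul_div, sub_le_iff_le_add]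
    exact (div_le_iff₀' hh).2 this
  rcases le_or_gt r a with hra | hra
  · rw [Nat.choose_eq_zero_of_lt (by omega)]
    simp only [Nat.cast_zero, mul_zero, add_zero]
    positivity
  rcases le_or_gt h g with hhg | hhg
  · have hn : a * g + h ≤ g * r := by nlinarith
    have hle := hMR.card_mul_choose_le hn hah
    rw [Nat.card_eq_fintype_card] at hle
    have hle' := (Nat.cast_le (α := ℝ)).2 hle
    rwa [Nat.cast_mul, Nat.cast_mul, Nat.cast_add, Nat.cast_sub (by omega), Nat.cast_one] at hle'
  · have hgh : (g : ℝ) ≤ h - 1 := by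
      rw [le_sub_iff_add_le]
      exact_mod_cast hhg
    gcongr
    exact le_add_of_nonneg_left (Nat.cast_nonneg _)

/-- **Proposition 3.4.** If `a + 2 ≤ h ≤ g = n/r`, then any maximally recoverable
`(n, r, h, a, q)`-local reconstruction code satisfies
`q ≥ ((n/r)/(h-1) - 1) * C(r, a+1) - 4`. -/
theorem mrlrc_field_size_lower_bound_h_ge_a_add_two
    (q n r a h : ℕ) (hq : IsPrimePow q) (hr : 0 < r) (hrn : r ∣ n) (har : a < r)
    (hah : a + 2 ≤ h) (hhg : h ≤ n / r)
    (hex : ExistsMRLRC (n / r) r h a q) :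
    (((n / r : ℕ) : ℝ) / ((h : ℝ) - 1) - 1) * (Nat.choose r (a + 1) : ℝ) - 4 ≤ (q : ℝ) := by
  have hgeneral := mrlrc_field_size_lower_bound_h_ge_a_add_two_general hah hex
  linarith
end

section
/- Let q be a prime power and let n, r, a, h be integers with r ∣ n, g = n/r, 2 ≤ h < a+2, and h ≤ g. If there exists a maximally recoverable (n,r,h,a,q)-local reconstruction code, then q ≥ ((g/(h−1)) − 1)·binomial(r−a+h−2, h−1) − 4. -/
/-!
Fix a core of `a + 2 - h` positions in each local group. The `(a + 1)`-subsets containing the core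
are supports of local codewords, whose heavy syndromes are `(r - a + h - 2).choose (h - 1)` vectors
of `F ^ h`. Two such supports together cover at most `a + h` positions, so by maximal
recoverability the vectors of one group are distinct points of the projective space
`PG(h - 1, q)`, while points taken from `h` different groups are independent. Hence a hyperplane
meets the points of at most `h - 1` groups. On the other hand, the hyperplanes through one point
and those through another overlap little, so by Cauchy–Schwarz the points of each group meet many
hyperplanes. Comparing the two counts of pairs (group, hyperplane meeting it) gives the bound.
-/

section Counting

open Finset Module

theorem sum_card_filter_mem {α β : Type*} [DecidableEq α] [Fintype β] {B : β → Finset α}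
    {U : Finset α} (hB : ∀ b, B b ⊆ U) : ∑ u ∈ U, #{b | u ∈ B b} = ∑ b, #(B b) := by
  refine (sum_card_bipartiteAbove_eq_sum_card_bipartiteBelow fun u b => u ∈ B b).trans ?_
  refine sum_congr rfl fun b _ => congrArg card ?_
  exact filter_mem_eq_inter.trans (inter_eq_right.2 (hB b))

/-- Corrádi's lemma. -/
theorem card_mul_sq_le_card_biUnion_mul_s2 {α ι : Type*} [DecidableEq α] [Fintype ι]
    {A : ι → Finset α} {x y : ℕ} (hx : ∀ i, #(A i) = x)
    (hy : Pairwise fun i j => #(A i ∩ A j) ≤ y) :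
    Fintype.card ι * x ^ 2 ≤ #(univ.biUnion A) * (x + (Fintype.card ι - 1) * y) := by
  classical
  set t := Fintype.card ι
  set U := univ.biUnion A
  have hAU (i : ι) : A i ⊆ U := subset_biUnion_of_mem A (mem_univ i)
  have sum_degree : ∑ u ∈ U, #{i | u ∈ A i} = t * x := by
    simp [sum_card_filter_mem hAU, hx, t]
  have sum_degree_sq : ∑ u ∈ U, #{i | u ∈ A i} ^ 2 = ∑ i, ∑ j, #(A i ∩ A j) := by
    rw [← Fintype.sum_prod_type',
      ← sum_card_filter_mem fun ij : ι × ι => inter_subset_left.trans (hAU ij.1)]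
    simp only [sq, ← card_product, ← filter_product, univ_product_univ, mem_inter]
  have sum_inter (i : ι) : ∑ j, #(A i ∩ A j) ≤ x + (t - 1) * y := by
    rw [← add_sum_erase _ _ (mem_univ i), inter_self, hx]
    gcongr
    simpa [t] using sum_le_card_nsmul (univ.erase i) _ y fun j hj => hy (ne_of_mem_erase hj).symm
  have key : t * (t * x ^ 2) ≤ t * (#U * (x + (t - 1) * y)) := calc
    t * (t * x ^ 2) = (∑ u ∈ U, #{i | u ∈ A i}) ^ 2 := by rw [sum_degree]; ring
    _ ≤ #U * ∑ i, ∑ j, #(A i ∩ A j) := sum_degree_sq ▸ sq_sum_le_card_mul_sum_sq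
    _ ≤ #U * (t * (x + (t - 1) * y)) := by
      gcongr
      exact sum_le_card_nsmul univ _ _ fun i _ => sum_inter i
    _ = t * (#U * (x + (t - 1) * y)) := by ring
  rcases t.eq_zero_or_pos with ht | ht
  · simp [ht]
  · exact Nat.le_of_mul_le_mul_left key ht

theorem card_mul_card_sub_one_le_card {K V ι : Type*} [Field K] [Fintype K] [AddCommGroup V]
    [Module K V] [Finite V] [Fintype ι] {v : ι → V} (hv₀ : ∀ s, v s ≠ 0)
    (hv : Pairwise fun s s' => LinearIndependent K ![v s, v s']) :
    Fintype.card ι * (Fintype.card K - 1) ≤ Nat.card V := by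
  have inj : Function.Injective fun s => Projectivization.mk K (v s) (hv₀ s) := by
    intro s s' hss
    by_contra hne
    obtain ⟨c, hc⟩ := (Projectivization.mk_eq_mk_iff' K _ _ (hv₀ s) (hv₀ s')).1 hss
    exact (LinearIndependent.pair_iff' (hv₀ s')).1 (hv (Ne.symm hne)) c hc
  rw [Projectivization.card' K V, ← Nat.card_eq_fintype_card, ← Nat.card_eq_fintype_card]
  exact le_add_right (Nat.mul_le_mul_right _ (Nat.card_le_card_of_injective _ inj))

section FunctionalsMeeting

variable (K : Type*) {V ι κ : Type*} [Field K] [AddCommGroup V] [Module K V] [Fintype (Dual K V)]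

open Classical in
/-- The nonzero functionals that vanish at some vector of the family `v`, that is, the hyperplanes
meeting the corresponding set of projective points. Functionals avoid the quotient by scalars: each
hyperplane is counted `|K| - 1` times. -/
noncomputable def functionalsMeeting (v : ι → V) : Finset (Dual K V) :=
  {f | f ≠ 0 ∧ ∃ s, f (v s) = 0}

variable {K} [FiniteDimensional K V]

open Classical in
theorem card_filter_mem_functionalsMeeting_lt [Nonempty ι] [Fintype κ] {p : κ → ι → V}
    (hp : ∀ T : Finset κ, #T = finrank K V → ∀ s : κ → ι, LinearIndepOn K (fun i => p i (s i)) T)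
    {f : Dual K V} (hf : f ≠ 0) :
    #{i | f ∈ functionalsMeeting K (p i)} < finrank K V := by
  by_contra! hle
  obtain ⟨T, hT, card_T⟩ := exists_subset_card_eq hle
  have meets (i : κ) : ∃ s, i ∈ T → f (p i s) = 0 := by
    by_cases hi : i ∈ T
    · obtain ⟨s, hs⟩ := (mem_filter.1 (mem_filter.1 (hT hi)).2).2.2
      exact ⟨s, fun _ => hs⟩
    · exact ⟨Classical.arbitrary ι, fun h => absurd h hi⟩
  choose s hs using meets
  have span_eq_top := (hp T card_T s).span_eq_top_of_card_eq_finrank' (by simpa using card_T)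
  exact hf (LinearMap.ext_on_range span_eq_top fun i => hs i i.2)

variable [Fintype K]

theorem sum_card_functionalsMeeting_le [Nonempty ι] [Fintype κ] {p : κ → ι → V}
    (hp : ∀ T : Finset κ, #T = finrank K V → ∀ s : κ → ι, LinearIndepOn K (fun i => p i (s i)) T) :
    ∑ i, #(functionalsMeeting K (p i)) ≤
      (Fintype.card K ^ finrank K V - 1) * (finrank K V - 1) := by
  classical
  let Φ : Finset (Dual K V) := univ.erase 0
  have card_Φ : #Φ = Fintype.card K ^ finrank K V - 1 := by
    rw [card_erase_of_mem (mem_univ _), card_univ, Module.card_eq_pow_finrank (K := K),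
      Subspace.dual_finrank_eq]
  have subset_Φ (i : κ) : functionalsMeeting K (p i) ⊆ Φ := fun f hf =>
    mem_erase.2 ⟨(mem_filter.1 hf).2.1, mem_univ f⟩
  calc ∑ i, #(functionalsMeeting K (p i))
      = ∑ f ∈ Φ, #{i | f ∈ functionalsMeeting K (p i)} := (sum_card_filter_mem subset_Φ).symm
    _ ≤ #Φ * (finrank K V - 1) := sum_le_card_nsmul _ _ _ fun f hf =>
        Nat.le_sub_one_of_lt (card_filter_mem_functionalsMeeting_lt hp (ne_of_mem_erase hf))
    _ = (Fintype.card K ^ finrank K V - 1) * (finrank K V - 1) := by rw [card_Φ]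

variable [Fintype ι]

open Classical in
theorem card_ne_zero_and_vanishing {v : ι → V} (hv : LinearIndependent K v) :
    #{f : Dual K V | f ≠ 0 ∧ ∀ i, f (v i) = 0} =
      Fintype.card K ^ (finrank K V - Fintype.card ι) - 1 := by
  set W := Submodule.span K (Set.range v)
  have mem_W (f : Dual K V) : f ∈ W.dualAnnihilator ↔ ∀ i, f (v i) = 0 := by
    rw [← SetLike.mem_coe, Submodule.coe_dualAnnihilator_span]
    exact Set.range_subset_iff
  have card_W : #{f : Dual K V | f ∈ W.dualAnnihilator} =
      Fintype.card K ^ (finrank K V - Fintype.card ι) := by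
    rw [← Subspace.finrank_add_finrank_dualAnnihilator_eq W, finrank_span_eq_card hv,
      Nat.add_sub_cancel_left, ← Fintype.card_subtype]
    exact Module.card_eq_pow_finrank (K := K) (V := W.dualAnnihilator)
  have filter_eq_erase : ({f : Dual K V | f ≠ 0 ∧ ∀ i, f (v i) = 0} : Finset (Dual K V)) =
      ({f : Dual K V | f ∈ W.dualAnnihilator} : Finset (Dual K V)).erase 0 := by
    ext f
    simp [mem_W]
  rw [filter_eq_erase, card_erase_of_mem (by simp), card_W]

theorem card_mul_pow_sub_le_card_functionalsMeeting_mul {v : ι → V}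
    (hn : 2 ≤ finrank K V) (hv₀ : ∀ s, v s ≠ 0)
    (hv : Pairwise fun s s' => LinearIndependent K ![v s, v s']) :
    Fintype.card ι * (Fintype.card K ^ finrank K V - Fintype.card K) ≤
      #(functionalsMeeting K v) * (Fintype.card K + (Fintype.card ι - 1)) := by
  classical
  obtain ⟨d, hd⟩ := Nat.exists_eq_add_of_le' hn
  set q := Fintype.card K
  set t := Fintype.card ι
  have hq : 2 ≤ q := Fintype.one_lt_card
  let A (s : ι) : Finset (Dual K V) := {f | f ≠ 0 ∧ f (v s) = 0}
  have card_A (s : ι) : #(A s) = q ^ (d + 1) - 1 := by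
    simpa [hd] using card_ne_zero_and_vanishing
      (LinearIndependent.of_subsingleton (R := K) (v := ![v s]) 0 (hv₀ s))
  have card_inter : Pairwise fun s s' => #(A s ∩ A s') ≤ q ^ d - 1 := by
    intro s s' hss
    refine (congrArg card ?_).trans_le
      ((card_ne_zero_and_vanishing (hv hss)).trans_le (by simp [hd, q]))
    ext f
    simp only [A, mem_inter, mem_filter, mem_univ, true_and, Fin.forall_fin_two,
      Matrix.cons_val_zero, Matrix.cons_val_one]
    tauto
  have biUnion_A : univ.biUnion A = functionalsMeeting K v := by
    ext f
    simp [A, functionalsMeeting]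
  have hmul : q * (q ^ d - 1) ≤ q ^ (d + 1) - 1 := by
    rw [Nat.mul_sub, ← pow_succ', mul_one]
    omega
  have hpos : 0 < q ^ (d + 1) - 1 := Nat.sub_pos_of_lt (Nat.one_lt_pow d.succ_ne_zero hq)
  have hpow : q ^ (d + 2) - q = q * (q ^ (d + 1) - 1) := by
    rw [Nat.mul_sub, ← pow_succ', mul_one]
  have corradi := card_mul_sq_le_card_biUnion_mul_s2 card_A card_inter
  rw [biUnion_A] at corradi
  rw [hd, hpow]
  generalize q ^ (d + 1) - 1 = x at *
  generalize q ^ d - 1 = y at *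
  refine Nat.le_of_mul_le_mul_left (c := x) ?_ hpos
  calc x * (t * (q * x)) = q * (t * x ^ 2) := by ring
    _ ≤ q * (#(functionalsMeeting K v) * (x + (t - 1) * y)) := by gcongr
    _ = #(functionalsMeeting K v) * (q * x + (t - 1) * (q * y)) := by ring
    _ ≤ #(functionalsMeeting K v) * (q * x + (t - 1) * x) := by gcongr
    _ = x * (#(functionalsMeeting K v) * (q + (t - 1))) := by ring

end FunctionalsMeeting

theorem le_mul_of_mul_sub_le {M q t N d : ℕ} (hq : 2 ≤ q) (hqM : q ^ 2 ≤ M)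
    (htM : t * (q - 1) ≤ M) (h : N * (M - q) ≤ (M - 1) * d * (q + (t - 1))) :
    N ≤ d * (q + t + 4) := by
  have hMq : q < M := (lt_self_pow₀ hq one_lt_two).trans_le hqM
  -- For `1 ≤ t` the right side exceeds the left by `5 * M - q ^ 2 - t * (q - 1) - 3 * q - 1`.
  have quotient_bound : (M - 1) * (q + (t - 1)) ≤ (q + t + 4) * (M - q) := by
    obtain ⟨c, rfl⟩ := Nat.exists_eq_add_of_lt hMq
    obtain ⟨b, rfl⟩ := Nat.exists_eq_add_of_le' (one_le_two.trans hq)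
    have htb : t * b ≤ b + 1 + c + 1 := by simpa using htM
    have : t - 1 ≤ t := Nat.sub_le _ _
    rw [show b + 1 + c + 1 - 1 = b + 1 + c by omega, show b + 1 + c + 1 - (b + 1) = c + 1 by omega]
    rcases t with _ | t <;> simp only [Nat.add_sub_cancel, Nat.zero_sub] <;> nlinarith
  refine Nat.le_of_mul_le_mul_right (h.trans ?_) (Nat.sub_pos_of_lt hMq)
  calc (M - 1) * d * (q + (t - 1)) = d * ((M - 1) * (q + (t - 1))) := by ring
    _ ≤ d * ((q + t + 4) * (M - q)) := by gcongr
    _ = d * (q + t + 4) * (M - q) := by ring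

theorem card_mul_card_le_of_linearIndepOn_s2 {K V ι κ : Type*} [Field K] [Fintype K]
    [AddCommGroup V] [Module K V] [FiniteDimensional K V] [Fintype ι] [Fintype κ] {p : κ → ι → V}
    (hn : 2 ≤ finrank K V) (hp₀ : ∀ i s, p i s ≠ 0)
    (hp₂ : ∀ i, Pairwise fun s s' => LinearIndependent K ![p i s, p i s'])
    (hp : ∀ T : Finset κ, #T = finrank K V → ∀ s : κ → ι, LinearIndepOn K (fun i => p i (s i)) T) :
    Fintype.card κ * Fintype.card ι ≤
      (finrank K V - 1) * (Fintype.card K + Fintype.card ι + 4) := by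
  rcases isEmpty_or_nonempty ι with _ | _
  · simp
  rcases isEmpty_or_nonempty κ with _ | ⟨⟨i₀⟩⟩
  · simp
  have : Finite V := Module.finite_of_finite K
  have : Finite (Dual K V) := Module.finite_of_finite K
  let _ : Fintype (Dual K V) := Fintype.ofFinite _
  have hq : 2 ≤ Fintype.card K := Fintype.one_lt_card
  refine le_mul_of_mul_sub_le hq (Nat.pow_le_pow_right (by omega) hn) ?_ ?_
  · simpa [Module.natCard_eq_pow_finrank (K := K)] using
      card_mul_card_sub_one_le_card (hp₀ i₀) (hp₂ i₀)
  · calc Fintype.card κ * Fintype.card ι * (Fintype.card K ^ finrank K V - Fintype.card K)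
        = ∑ _ : κ, Fintype.card ι * (Fintype.card K ^ finrank K V - Fintype.card K) := by
          simp [mul_assoc]
      _ ≤ ∑ i, #(functionalsMeeting K (p i)) * (Fintype.card K + (Fintype.card ι - 1)) :=
          sum_le_sum fun i _ =>
            card_mul_pow_sub_le_card_functionalsMeeting_mul hn (hp₀ i) (hp₂ i)
      _ = (∑ i, #(functionalsMeeting K (p i))) *
            (Fintype.card K + (Fintype.card ι - 1)) := (sum_mul _ _ _).symm
      _ ≤ (Fintype.card K ^ finrank K V - 1) * (finrank K V - 1) *
            (Fintype.card K + (Fintype.card ι - 1)) := by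
          gcongr
          exact sum_card_functionalsMeeting_le hp

end Counting

section FinsetExistence

open Finset

theorem exists_card_eq_choose_and_card_union_le {α : Type*} [Fintype α] [DecidableEq α] {b : ℕ}
    (hb : b ≤ Fintype.card α) (m : ℕ) :
    ∃ 𝒮 : Finset (Finset α), #𝒮 = (Fintype.card α - b).choose m ∧ (∀ S ∈ 𝒮, #S = b + m) ∧
      ∀ S ∈ 𝒮, ∀ S' ∈ 𝒮, #(S ∪ S') ≤ b + 2 * m := by
  obtain ⟨T, -, hT⟩ := exists_subset_card_eq (s := (univ : Finset α)) (n := b) (by simpa)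
  have mem_iff (S : Finset α) :
      S ∈ (powersetCard (b + m) univ).filter (T ⊆ ·) ↔ #S = b + m ∧ T ⊆ S := by simp
  refine ⟨(powersetCard (b + m) univ).filter (T ⊆ ·), ?_, fun S hS => ((mem_iff S).1 hS).1, ?_⟩
  · rw [card_filter_powersetCard_subset _ _ _ (subset_univ T) (by omega), card_univ, hT,
      Nat.add_sub_cancel_left]
  · intro S hS S' hS'
    obtain ⟨card_S, hTS⟩ := (mem_iff S).1 hS
    obtain ⟨card_S', hTS'⟩ := (mem_iff S').1 hS'
    have card_T_le := card_le_card (subset_inter hTS hTS')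
    have card_union := card_union_add_card_inter S S'
    omega

theorem exists_card_eq_of_sum_card_sub_le {κ ρ : Type*} [Fintype κ] [DecidableEq κ] [Fintype ρ]
    {a h : ℕ} {U : κ → Finset ρ} (ha : a ≤ Fintype.card ρ)
    (hah : a * Fintype.card κ + h ≤ Fintype.card κ * Fintype.card ρ)
    (hU : ∑ i, (#(U i) - a) ≤ h) :
    ∃ E : Finset (κ × ρ), #E = a * Fintype.card κ + h ∧ (∀ i, a ≤ #{x ∈ E | x.1 = i}) ∧
      ∀ i, ∀ k ∈ U i, (i, k) ∈ E := by
  classical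
  have enlarge (i : κ) : ∃ W, U i ⊆ W ∧ #W = a + (#(U i) - a) :=
    exists_superset_card_eq (by omega) (by have := card_le_univ (U i); omega)
  choose W hUW card_W using enlarge
  let E₀ := univ.biUnion fun i => (W i).image (Prod.mk i)
  have card_E₀ : #E₀ ≤ a * Fintype.card κ + h := calc
    #E₀ ≤ ∑ i, #(W i) := card_biUnion_le.trans (sum_le_sum fun i _ => card_image_le)
    _ = a * Fintype.card κ + ∑ i, (#(U i) - a) := by simp [card_W, sum_add_distrib, mul_comm]
    _ ≤ a * Fintype.card κ + h := by gcongr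
  obtain ⟨E, hE₀E, card_E⟩ := exists_superset_card_eq card_E₀ (by simpa)
  have mem_E {i : κ} {k : ρ} (hk : k ∈ W i) : (i, k) ∈ E :=
    hE₀E (mem_biUnion.2 ⟨i, mem_univ i, mem_image_of_mem _ hk⟩)
  refine ⟨E, card_E, fun i => ?_, fun i k hk => mem_E (hUW i hk)⟩
  calc a ≤ #((W i).image (Prod.mk i)) := by
        rw [card_image_of_injective _ (Prod.mk_right_injective i), card_W]; omega
    _ ≤ #{x ∈ E | x.1 = i} := card_le_card (by
        intro x hx
        obtain ⟨k, hk, rfl⟩ := mem_image.1 hx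
        exact mem_filter.2 ⟨mem_E hk, rfl⟩)

end FinsetExistence

section Kernel

open Finset Matrix

variable {F : Type*} [Field F]

theorem sum_smul_col_eq_mulVec {m n : Type*} [Fintype n] (M : Matrix m n F) {s : Finset n}
    {x : n → F} (hx : ∀ k ∉ s, x k = 0) : ∑ k ∈ s, x k • M.col k = M *ᵥ x := by
  rw [sum_subset (subset_univ s) fun k _ hk => by rw [hx k hk, zero_smul], mulVec_eq_sum]
  exact sum_congr rfl fun k _ => (op_smul_eq_smul (x k) (M.col k)).symm

theorem eq_zero_of_mulVec_eq_zero_of_linearIndepOn {m n : Type*} [Fintype n] {M : Matrix m n F}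
    {s : Finset n} (hM : LinearIndepOn F M.col s) {x : n → F} (hx : ∀ k ∉ s, x k = 0)
    (hMx : M *ᵥ x = 0) : x = 0 := by
  funext k
  by_cases hk : k ∈ s
  · exact linearIndepOn_finset_iff.1 hM x ((sum_smul_col_eq_mulVec M hx).trans hMx) k hk
  · exact hx k hk

theorem exists_mulVec_eq_zero_of_card_eq_succ {m n : Type*} [Fintype m] [Fintype n]
    {A : Matrix m n F}
    (hA : ∀ s : Finset n, #s = Fintype.card m → LinearIndepOn F A.col s) {S : Finset n}
    (hS : #S = Fintype.card m + 1) : ∃ x : n → F, (∀ k, x k ≠ 0 ↔ k ∈ S) ∧ A *ᵥ x = 0 := by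
  classical
  have not_indep : ¬ LinearIndepOn F A.col S := fun hind => by
    have := hind.fintype_card_le_finrank
    simp [hS] at this
  rw [linearIndepOn_finset_iff] at not_indep
  push Not at not_indep
  obtain ⟨c, hc, k₀, hk₀, hck₀⟩ := not_indep
  let x : n → F := fun k => if k ∈ S then c k else 0
  have hAx : A *ᵥ x = 0 := by
    rw [← sum_smul_col_eq_mulVec A fun k hk => if_neg hk, ← hc]
    exact sum_congr rfl fun k hk => by rw [if_pos hk]
  have x_ne_zero : x k₀ ≠ 0 := by simpa [x, hk₀] using hck₀
  refine ⟨x, fun k => ⟨fun hk => ?_, fun hkS hk => ?_⟩, hAx⟩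
  · by_contra hkS
    exact hk (if_neg hkS)
  · refine x_ne_zero (congrFun (eq_zero_of_mulVec_eq_zero_of_linearIndepOn
      (hA (S.erase k) (by simp [card_erase_of_mem hkS, hS])) (fun l hl => ?_) hAx) k₀)
    by_cases hlk : l = k
    · rwa [hlk]
    · exact if_neg fun hlS => hl (mem_erase.2 ⟨hlk, hlS⟩)

theorem linearIndependent_pair_of_support_ne {n : Type*} {x y : n → F} {S S' : Finset n}
    (hx : ∀ k, x k ≠ 0 ↔ k ∈ S) (hy : ∀ k, y k ≠ 0 ↔ k ∈ S') (hcard : #S = #S') (hne : S ≠ S') :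
    LinearIndependent F ![x, y] := by
  obtain ⟨k, hkS, hkS'⟩ : ∃ k ∈ S, k ∉ S' :=
    not_subset.1 fun hsub => hne (eq_of_subset_of_card_le hsub hcard.ge)
  obtain ⟨l, hlS', hlS⟩ : ∃ l ∈ S', l ∉ S :=
    not_subset.1 fun hsub => hne (eq_of_subset_of_card_le hsub hcard.le).symm
  have hyk : y k = 0 := not_not.1 fun h => hkS' ((hy k).1 h)
  have hxl : x l = 0 := not_not.1 fun h => hlS ((hx l).1 h)
  refine LinearIndependent.pair_iff.2 fun c d hcd => ⟨?_, ?_⟩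
  · simpa [(hx k).2 hkS, hyk] using congrFun hcd k
  · simpa [(hy l).2 hlS', hxl] using congrFun hcd l

end Kernel

section LRC

open Finset Matrix

variable {F : Type} [Field F] {g r a h : ℕ} {A : Fin g → Matrix (Fin a) (Fin r) F}
  {B : Fin g → Matrix (Fin h) (Fin r) F}

theorem lrcParityCheck_mulVec (y : Fin g → Fin r → F) :
    lrcParityCheck F g r a h A B *ᵥ (fun c => y c.1 c.2) =
      Sum.elim (fun p => (A p.1 *ᵥ y p.1) p.2) (∑ i, B i *ᵥ y i) := by
  funext ρ
  rcases ρ with ⟨i, j⟩ | j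
  · simp [lrcParityCheck, mulVec, dotProduct, Fintype.sum_prod_type, ite_mul]
  · simp [lrcParityCheck, mulVec, dotProduct, Fintype.sum_prod_type]

namespace IsMRLRC

section Codewords

variable [DecidableEq F]

theorem eq_zero_of_sum_hammingNorm_sub_le (hMR : IsMRLRC F g r a h A B) (har : a < r) (hhg : h ≤ g)
    {y : Fin g → Fin r → F} (hA : ∀ i, A i *ᵥ y i = 0) (hB : ∑ i, B i *ᵥ y i = 0)
    (hy : ∑ i, (hammingNorm (y i) - a) ≤ h) : y = 0 := by
  have fits : a * g + h ≤ g * r := calc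
    a * g + h ≤ g * (a + 1) := by linarith
    _ ≤ g * r := Nat.mul_le_mul_left g har
  obtain ⟨E, card_E, group_le, supp_subset⟩ := exists_card_eq_of_sum_card_sub_le
    (U := fun i => ({k | y i k ≠ 0} : Finset (Fin r))) (a := a) (h := h)
    (by simpa using har.le) (by simpa using fits) hy
  rw [Fintype.card_fin] at card_E
  have codeword : lrcParityCheck F g r a h A B *ᵥ (fun c => y c.1 c.2) = 0 := by
    rw [lrcParityCheck_mulVec, hB]
    funext ρ
    rcases ρ with ⟨i, j⟩ | j
    · exact congrFun (hA i) j
    · rfl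
  have columns : LinearIndepOn F (lrcParityCheck F g r a h A B).col E :=
    hMR.2 E card_E group_le
  have flat_eq_zero := eq_zero_of_mulVec_eq_zero_of_linearIndepOn columns
    (fun c hc => not_not.1 fun hne => hc (supp_subset c.1 c.2 (by simpa using hne))) codeword
  funext i k
  exact congrFun flat_eq_zero (i, k)

theorem eq_zero_of_hammingNorm_le (hMR : IsMRLRC F g r a h A B) (har : a < r) (hhg : h ≤ g)
    {i : Fin g} {x : Fin r → F} (hA : A i *ᵥ x = 0) (hB : B i *ᵥ x = 0)
    (hx : hammingNorm x ≤ a + h) : x = 0 := by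
  have single_eq_zero : (Pi.single i x : Fin g → Fin r → F) = 0 := by
    have apply_single {m : ℕ} (M : Fin g → Matrix (Fin m) (Fin r) F) (hM : M i *ᵥ x = 0)
        (j : Fin g) : M j *ᵥ (Pi.single i x : Fin g → Fin r → F) j = 0 := by
      rcases eq_or_ne j i with rfl | hji
      · rwa [Pi.single_eq_same]
      · rw [Pi.single_eq_of_ne hji, mulVec_zero]
    refine hMR.eq_zero_of_sum_hammingNorm_sub_le har hhg (apply_single A hA)
      (sum_eq_zero fun j _ => apply_single B hB j) ?_
    rw [sum_eq_single i (fun j _ hji => by simp [hji]) (by simp), Pi.single_eq_same]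
    omega
  exact Pi.single_eq_zero_iff.1 single_eq_zero

theorem linearIndepOn_mulVec_of_hammingNorm_le (hMR : IsMRLRC F g r a h A B) (har : a < r)
    (hhg : h ≤ g) {x : Fin g → Fin r → F} (hA : ∀ i, A i *ᵥ x i = 0) (hx₀ : ∀ i, x i ≠ 0)
    (hx : ∀ i, hammingNorm (x i) ≤ a + 1) {T : Finset (Fin g)} (hT : #T ≤ h) :
    LinearIndepOn F (fun i => B i *ᵥ x i) T := by
  refine linearIndepOn_finset_iff.2 fun c hc i hi => ?_
  let y (i : Fin g) : Fin r → F := if i ∈ T then c i • x i else 0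
  have y_eq_zero : y = 0 := by
    refine hMR.eq_zero_of_sum_hammingNorm_sub_le har hhg (fun j => ?_) ?_ ?_
    · by_cases hj : j ∈ T <;> simp [y, hj, mulVec_smul, hA]
    · rw [← hc]
      simp [y, apply_ite, mulVec_smul, sum_ite_mem]
    · calc ∑ j, (hammingNorm (y j) - a) ≤ ∑ j, if j ∈ T then 1 else 0 := by
            refine sum_le_sum fun j _ => ?_
            split_ifs with hj
            · have := (hammingNorm_smul_le_hammingNorm (k := c j) (x := x j)).trans (hx j)
              simpa [y, hj, add_comm] using this
            · simp [y, hj]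
        _ ≤ h := by simpa using hT
  have smul_eq_zero : c i • x i = 0 := by simpa [y, hi] using congrFun y_eq_zero i
  exact (smul_eq_zero_iff_left (hx₀ i)).1 smul_eq_zero

end Codewords

theorem linearIndependent_mulVec_pair (hMR : IsMRLRC F g r a h A B) (har : a < r) (hhg : h ≤ g)
    {i : Fin g} {x x' : Fin r → F} (hx : A i *ᵥ x = 0) (hx' : A i *ᵥ x' = 0)
    (hind : LinearIndependent F ![x, x']) {U : Finset (Fin r)} (hxU : ∀ k, x k ≠ 0 → k ∈ U)
    (hx'U : ∀ k, x' k ≠ 0 → k ∈ U) (hU : #U ≤ a + h) :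
    LinearIndependent F ![B i *ᵥ x, B i *ᵥ x'] := by
  classical
  refine LinearIndependent.pair_iff.2 fun c d hcd => LinearIndependent.pair_iff.1 hind c d ?_
  refine hMR.eq_zero_of_hammingNorm_le har hhg (i := i) ?_ ?_ ((card_le_card ?_).trans hU)
  · simp [mulVec_add, mulVec_smul, hx, hx']
  · simpa [mulVec_add, mulVec_smul] using hcd
  · intro k hk
    by_contra hkU
    have hxk : x k = 0 := not_not.1 (mt (hxU k) hkU)
    have hx'k : x' k = 0 := not_not.1 (mt (hx'U k) hkU)
    simp [hxk, hx'k] at hk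

theorem mul_choose_le [Fintype F] (hMR : IsMRLRC F g r a h A B) (har : a < r) (h2 : 2 ≤ h)
    (hha : h < a + 2) (hhg : h ≤ g) :
    g * (r - a + h - 2).choose (h - 1) ≤
      (h - 1) * (Fintype.card F + (r - a + h - 2).choose (h - 1) + 4) := by
  classical
  obtain ⟨𝒮, card_𝒮, card_eq, card_union_le⟩ := exists_card_eq_choose_and_card_union_le
    (α := Fin r) (b := a + 2 - h) (by rw [Fintype.card_fin]; omega) (h - 1)
  have exists_codeword (i : Fin g) (S : 𝒮) :
      ∃ x : Fin r → F, (∀ k, x k ≠ 0 ↔ k ∈ S.1) ∧ A i *ᵥ x = 0 :=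
    exists_mulVec_eq_zero_of_card_eq_succ
      (fun s hs => hMR.1 i s (by simpa using hs))
      (by rw [card_eq S S.2, Fintype.card_fin]; omega)
  choose x supp_x hAx using exists_codeword
  have hammingNorm_x (i : Fin g) (S : 𝒮) : hammingNorm (x i S) = a + 1 := by
    simp only [hammingNorm, supp_x, filter_univ_mem, card_eq S S.2]
    omega
  have x_ne_zero (i : Fin g) (S : 𝒮) : x i S ≠ 0 := by
    rw [← hammingNorm_ne_zero_iff, hammingNorm_x]
    omega
  have syndrome_ne_zero (i : Fin g) (S : 𝒮) : B i *ᵥ x i S ≠ 0 := fun hB =>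
    x_ne_zero i S (hMR.eq_zero_of_hammingNorm_le har hhg (hAx i S) hB
      (by rw [hammingNorm_x]; omega))
  have syndrome_pair (i : Fin g) :
      Pairwise fun S S' => LinearIndependent F ![B i *ᵥ x i S, B i *ᵥ x i S'] := by
    intro S S' hne
    have pair := linearIndependent_pair_of_support_ne (supp_x i S) (supp_x i S')
      ((card_eq S S.2).trans (card_eq S' S'.2).symm) (Subtype.coe_ne_coe.2 hne)
    refine hMR.linearIndependent_mulVec_pair har hhg (hAx i S) (hAx i S') pair
      (fun k hk => mem_union_left _ ((supp_x i S k).1 hk))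
      (fun k hk => mem_union_right _ ((supp_x i S' k).1 hk)) ?_
    have := card_union_le S S.2 S' S'.2
    omega
  have key := card_mul_card_le_of_linearIndepOn_s2 (K := F) (p := fun i S => B i *ᵥ x i S)
    (by simpa using h2) syndrome_ne_zero syndrome_pair fun T hT s =>
      hMR.linearIndepOn_mulVec_of_hammingNorm_le har hhg (fun i => hAx i (s i))
        (fun i => x_ne_zero i (s i)) (fun i => (hammingNorm_x i (s i)).le) (by simpa using hT.le)
  simpa [card_𝒮, show r - (a + 2 - h) = r - a + h - 2 by omega] using key

end IsMRLRC

end LRC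

/-- **Proposition 3.5.** If `2 ≤ h < a + 2` and `h ≤ g = n/r`, then any maximally recoverable
`(n, r, h, a, q)`-local reconstruction code satisfies
`q ≥ ((n/r)/(h-1) - 1) * C(r-a+h-2, h-1) - 4`. -/
theorem mrlrc_field_size_lower_bound_h_lt_a_add_two
    (q n r a h : ℕ) (hq : IsPrimePow q) (hr : 0 < r) (hrn : r ∣ n) (har : a < r)
    (h2 : 2 ≤ h) (hha : h < a + 2) (hhg : h ≤ n / r)
    (hex : ExistsMRLRC (n / r) r h a q) :
    (((n / r : ℕ) : ℝ) / ((h : ℝ) - 1) - 1) * (Nat.choose (r - a + h - 2) (h - 1) : ℝ) - 4 ≤ (q : ℝ) := by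
  obtain ⟨F, _, _, rfl, A, B, hMR⟩ := hex
  have h_sub_one_pos : (0 : ℝ) < h - 1 := sub_pos.2 (Nat.one_lt_cast.2 h2)
  have cast_h_sub_one : ((h - 1 : ℕ) : ℝ) = h - 1 := by
    rw [Nat.cast_sub (one_le_two.trans h2), Nat.cast_one]
  have bound : ((n / r : ℕ) : ℝ) * (r - a + h - 2).choose (h - 1) ≤
      (h - 1) * (Fintype.card F + (r - a + h - 2).choose (h - 1) + 4) := by
    rw [← cast_h_sub_one]
    exact_mod_cast hMR.mul_choose_le har h2 hha hhg
  have quotient_bound := (div_le_iff₀' h_sub_one_pos).2 bound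
  rw [mul_div_right_comm] at quotient_bound
  linarith
end

section
/- Fix integers a ≥ 0 and h ≥ g ≥ 2 with a ≥ h − 2⌈h/g⌉. There exists a constant c > 0 (depending only on a, g, h) such that for every prime power q and every n divisible by g, if there exists a maximally recoverable (n, n/g, h, a, q)-local reconstruction code with g local groups each of size r = n/g, then q ≥ c · n^{h/⌈h/g⌉ − 1}. -/
/-! A nonzero combination `l` of the heavy parities *agrees* on a set `S` of coordinates of the
`i`-th group if some combination `u` of the local parities satisfies `u ᵥ* A i = l ᵥ* B i` on `S`.
If `g * t ≥ h`, maximal recoverability says that no nonzero `l` agrees on `a + t` coordinates in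
every group. It also makes the codes generated by `A i` and by `A i` and `B i` together MDS, so
agreeing on a given set of `a + t` coordinates cuts out a subspace of codimension `t`, and any two
of these subspaces are in general position as long as their coordinate sets share at most `a`
elements. If `q` were much smaller than `r ^ (1 + e / t)` with `e = min a (h - 2 * t) ≥ 0`, the
second moment method, applied to a family of coordinate sets few pairs of which share more than `a`
elements, would show that in each group almost every `l` agrees on some `a + t` coordinates, and
a union bound over the groups would give one nonzero `l` doing so in all of them. When `h < 2 * t`
the exponent is at most `1` and the bound `r < q + a + h` for MDS codes suffices. -/

open Finset Module

section MDS

variable {F V ι : Type*} [Field F] [AddCommGroup V] [Module F V]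

/-- The linear map sending a message to the restriction of its codeword to the coordinates in
`S` (the puncturing of the code at the other coordinates). -/
def restrictCoords (φ : V →ₗ[F] ι → F) (S : Finset ι) : V →ₗ[F] S → F :=
  LinearMap.funLeft F F Subtype.val ∘ₗ φ

lemma restrictCoords_apply (φ : V →ₗ[F] ι → F) (S : Finset ι) (v : V) (c : S) :
    restrictCoords φ S v c = φ v c := rfl

/-- `φ` encodes an MDS code of dimension `finrank F V`: a codeword vanishing on `finrank F V`
coordinates comes from the zero message. In particular `φ` is injective. -/
structure IsMDS [Fintype ι] (φ : V →ₗ[F] ι → F) : Prop where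
  finrank_le_card : finrank F V ≤ Fintype.card ι
  eq_zero_of_forall_mem {T : Finset ι} (hT : finrank F V ≤ #T) {v : V} (hv : ∀ c ∈ T, φ v c = 0) :
    v = 0

namespace IsMDS

variable [Fintype ι] {φ : V →ₗ[F] ι → F} {S : Finset ι}

lemma restrictCoords_injective (hφ : IsMDS φ) (hS : finrank F V ≤ #S) :
    Function.Injective (restrictCoords φ S) :=
  (injective_iff_map_eq_zero _).2 fun _ hv =>
    hφ.eq_zero_of_forall_mem hS fun c hc => congrFun hv ⟨c, hc⟩

/-- Two words vanishing on a common set of `finrank F V - 2` coordinates cannot have the same ratio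
at two other coordinates: the corresponding combination would have `finrank F V` zeros. -/
lemma injOn_div [DecidableEq ι] (hφ : IsMDS φ) {T : Finset ι} {y : ι} (hy : y ∈ T)
    (hT : finrank F V ≤ #T + 1) {u v : V} (hu : ∀ z ∈ T, φ u z = 0) (hu' : ∀ z ∉ T, φ u z ≠ 0)
    (hv : ∀ z ∈ T.erase y, φ v z = 0) (hvy : φ v y ≠ 0) :
    Set.InjOn (fun z => φ v z / φ u z) (Tᶜ : Finset ι) := by
  intro z hz z' hz' h_eq
  rw [mem_coe, mem_compl] at hz hz'
  by_contra hne
  have hw : v - (φ v z / φ u z) • u = 0 := by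
    refine hφ.eq_zero_of_forall_mem (T := insert z (insert z' (T.erase y))) ?_ ?_
    · rw [card_insert_of_notMem (by simp [hne, hz]), card_insert_of_notMem (by simp [hz']),
        card_erase_of_mem hy]
      omega
    · simp only [forall_mem_insert, map_sub, map_smul, Pi.sub_apply, Pi.smul_apply, smul_eq_mul]
      refine ⟨?_, ?_, fun c hc => ?_⟩
      · rw [div_mul_cancel₀ _ (hu' z hz), sub_self]
      · rw [show φ v z / φ u z = φ v z' / φ u z' from h_eq, div_mul_cancel₀ _ (hu' z' hz'),
          sub_self]
      · rw [hv c hc, hu c (mem_of_mem_erase hc), mul_zero, sub_self]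
  refine hvy ?_
  rw [sub_eq_zero.1 hw, map_smul, Pi.smul_apply, hu y hy, smul_zero]

variable [FiniteDimensional F V]

lemma restrictCoords_surjective (hφ : IsMDS φ) (hS : #S ≤ finrank F V) :
    Function.Surjective (restrictCoords φ S) := by
  obtain ⟨T, hST, -, hT⟩ := exists_subsuperset_card_eq (subset_univ S) hS hφ.finrank_le_card
  have hT_surj : Function.Surjective (restrictCoords φ T) :=
    (LinearMap.injective_iff_surjective_of_finrank_eq_finrank (by simp [hT])).1
      (hφ.restrictCoords_injective hT.ge)
  exact (LinearMap.funLeft_surjective_of_injective F F _ (Set.inclusion_injective hST)).comp hT_surj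

lemma exists_forall_mem_eq (hφ : IsMDS φ) (hS : #S ≤ finrank F V) (y : ι → F) :
    ∃ v, ∀ c ∈ S, φ v c = y c := by
  obtain ⟨v, hv⟩ := hφ.restrictCoords_surjective hS fun c => y c
  exact ⟨v, fun c hc => congrFun hv ⟨c, hc⟩⟩

theorem card_lt_card_add_finrank [Fintype F] (hφ : IsMDS φ)
    (hV : 2 ≤ finrank F V) : Fintype.card ι < Fintype.card F + finrank F V := by
  classical
  have hV_le := hφ.finrank_le_card
  obtain ⟨T, -, hT⟩ := exists_subset_card_eq (s := (univ : Finset ι)) (n := finrank F V - 1)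
    (by rw [card_univ]; omega)
  obtain ⟨y, hy⟩ : T.Nonempty := card_pos.1 (by omega)
  obtain ⟨x, hx⟩ : ∃ x, x ∉ T := by
    by_contra! h_all
    rw [eq_univ_of_forall h_all, card_univ] at hT
    omega
  obtain ⟨u, hu⟩ := hφ.exists_forall_mem_eq (S := insert x T)
    (by rw [card_insert_of_notMem hx]; omega) (Pi.single x 1)
  obtain ⟨v, hv⟩ := hφ.exists_forall_mem_eq (S := T) (by omega) (Pi.single y 1)
  have hu_mem : ∀ z ∈ T, φ u z = 0 := fun z hz => by
    rw [hu z (mem_insert_of_mem hz), Pi.single_eq_of_ne (ne_of_mem_of_not_mem hz hx)]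
  have hu_notMem : ∀ z ∉ T, φ u z ≠ 0 := fun z hz hz0 => by
    have hu0 : u = 0 := hφ.eq_zero_of_forall_mem (T := insert z T)
      (by rw [card_insert_of_notMem hz]; omega) (by simpa [hz0] using hu_mem)
    simpa [hu0] using hu x (mem_insert_self x T)
  have h_inj := hφ.injOn_div hy (by omega) hu_mem hu_notMem (v := v)
    (fun z hz => by rw [hv z (mem_of_mem_erase hz), Pi.single_eq_of_ne (ne_of_mem_erase hz)])
    (by simp [hv y hy])
  have h_card := card_le_card_of_injOn (t := (univ : Finset F)) _ (fun _ _ => mem_univ _) h_inj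
  rw [card_compl, hT, card_univ] at h_card
  omega

end IsMDS

end MDS

section Agreement

variable {F L U ι : Type*} [Field F] [AddCommGroup L] [Module F L] [AddCommGroup U] [Module F U]
  {α : U →ₗ[F] ι → F} {β : L →ₗ[F] ι → F} {S T : Finset ι}

/-- The heavy parity combinations `l` whose word `β l` can be cancelled on the coordinates in `S`
by a combination `α u` of the local parities. -/
def agreeOn (α : U →ₗ[F] ι → F) (β : L →ₗ[F] ι → F) (S : Finset ι) : Submodule F L :=
  (LinearMap.range (restrictCoords α S)).comap (restrictCoords β S)

lemma mem_agreeOn {l : L} : l ∈ agreeOn α β S ↔ ∃ u, ∀ c ∈ S, α u c = β l c := by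
  simp [agreeOn, funext_iff, restrictCoords_apply]

variable [Fintype ι]

lemma agreeOn_inf_agreeOn [DecidableEq ι] (hα : IsMDS α) (hST : finrank F U ≤ #(S ∩ T)) :
    agreeOn α β S ⊓ agreeOn α β T = agreeOn α β (S ∪ T) := by
  ext l
  simp only [Submodule.mem_inf, mem_agreeOn]
  constructor
  · rintro ⟨⟨u, hu⟩, u', hu'⟩
    have huu' : u - u' = 0 := hα.eq_zero_of_forall_mem hST fun c hc => by
      rw [map_sub, Pi.sub_apply, hu c (mem_inter.1 hc).1, hu' c (mem_inter.1 hc).2, sub_self]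
    rw [← sub_eq_zero.1 huu'] at hu'
    exact ⟨u, fun c hc => (mem_union.1 hc).elim (hu c) (hu' c)⟩
  · rintro ⟨u, hu⟩
    exact ⟨⟨u, fun c hc => hu c (mem_union_left T hc)⟩, u, fun c hc => hu c (mem_union_right S hc)⟩

variable [FiniteDimensional F L] [FiniteDimensional F U]

lemma finrank_agreeOn_add_card (hα : IsMDS α) (hβα : IsMDS (β.coprod α)) (hUS : finrank F U ≤ #S)
    (hS : #S ≤ finrank F L + finrank F U) :
    finrank F (agreeOn α β S) + #S = finrank F L + finrank F U := by
  set R := LinearMap.range (restrictCoords α S)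
  have h_surj : Function.Surjective (R.mkQ ∘ₗ restrictCoords β S) := by
    intro y
    obtain ⟨y, rfl⟩ := R.mkQ_surjective y
    obtain ⟨⟨l, u⟩, rfl⟩ := hβα.restrictCoords_surjective (by rwa [finrank_prod]) y
    refine ⟨l, (Submodule.Quotient.eq R).2 ⟨-u, ?_⟩⟩
    ext c
    simp [restrictCoords_apply]
  have h_ker : LinearMap.ker (R.mkQ ∘ₗ restrictCoords β S) = agreeOn α β S := by
    rw [LinearMap.ker_comp, Submodule.ker_mkQ, agreeOn]
  have h_rank := (R.mkQ ∘ₗ restrictCoords β S).finrank_range_add_finrank_ker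
  rw [LinearMap.range_eq_top.2 h_surj, finrank_top, h_ker] at h_rank
  have h_quot := R.finrank_quotient_add_finrank
  rw [LinearMap.finrank_range_of_inj (hα.restrictCoords_injective hUS), finrank_fintype_fun_eq_card,
    Fintype.card_coe] at h_quot
  omega

lemma agreeOn_sup_agreeOn_eq_top [DecidableEq ι] (hα : IsMDS α) (hβα : IsMDS (β.coprod α))
    (h_inter : #(S ∩ T) ≤ finrank F U) (h_union : #(S ∪ T) ≤ finrank F L + finrank F U) :
    agreeOn α β S ⊔ agreeOn α β T = ⊤ := by
  refine eq_top_iff.2 fun l _ => ?_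
  obtain ⟨e, he⟩ := hα.exists_forall_mem_eq h_inter (β l)
  obtain ⟨⟨l', u⟩, hw⟩ := hβα.exists_forall_mem_eq (S := S ∪ T) (by rwa [finrank_prod])
    fun c => if c ∈ S then 0 else β l c - α e c
  simp only [LinearMap.coprod_apply, Pi.add_apply] at hw
  refine Submodule.mem_sup.2 ⟨l', mem_agreeOn.2 ⟨-u, fun c hc => ?_⟩, l - l',
    mem_agreeOn.2 ⟨e + u, fun c hc => ?_⟩, add_sub_cancel l' l⟩
  · have hwc := hw c (mem_union_left T hc)
    rw [if_pos hc] at hwc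
    rw [map_neg, Pi.neg_apply, neg_eq_of_add_eq_zero_left hwc]
  · have hwc : β l' c + α u c = β l c - α e c := by
      rw [hw c (mem_union_right S hc)]
      split_ifs with hcS
      · rw [he c (mem_inter.2 ⟨hcS, hc⟩), sub_self]
      · rfl
    simp only [map_add, map_sub, Pi.add_apply, Pi.sub_apply]
    linear_combination hwc

/-- Here `#(S ∩ T) - finrank F U` is truncated: `agreeOn α β S` and `agreeOn α β T` are in general
position as long as `#(S ∩ T) ≤ finrank F U`. -/
lemma finrank_agreeOn_inf_agreeOn [DecidableEq ι] (hα : IsMDS α) (hβα : IsMDS (β.coprod α)) {t : ℕ}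
    (hS : #S = finrank F U + t) (hT : #T = finrank F U + t)
    (h_union : #(S ∪ T) ≤ finrank F L + finrank F U) :
    finrank F (agreeOn α β S ⊓ agreeOn α β T : Submodule F L) + 2 * t =
      finrank F L + (#(S ∩ T) - finrank F U) := by
  have h_card := card_union_add_card_inter S T
  have hS_le := card_le_card (subset_union_left (s₁ := S) (s₂ := T))
  rcases le_total #(S ∩ T) (finrank F U) with h_inter | h_inter
  · have h_dim := Submodule.finrank_sup_add_finrank_inf_eq (agreeOn α β S) (agreeOn α β T)
    rw [agreeOn_sup_agreeOn_eq_top hα hβα h_inter h_union, finrank_top] at h_dim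
    have hS_dim := finrank_agreeOn_add_card (S := S) hα hβα (by omega) (by omega)
    have hT_dim := finrank_agreeOn_add_card (S := T) hα hβα (by omega) (by omega)
    omega
  · have h_dim := finrank_agreeOn_add_card (S := S ∪ T) hα hβα (by omega) h_union
    rw [agreeOn_inf_agreeOn hα h_inter]
    omega

end Agreement

section Counting

variable {Λ κ μ σ : Type*}

/-- Cauchy–Schwarz for the number of members of the family containing a given point. -/
lemma sq_sum_card_le_card_biUnion_mul [DecidableEq Λ] [Fintype κ] (E : κ → Finset Λ) :
    (∑ i, #(E i)) ^ 2 ≤ #(univ.biUnion E) * ∑ i, ∑ j, #(E i ∩ E j) := by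
  classical
  have h_first : ∑ i, #(E i) = ∑ x ∈ univ.biUnion E, #{i | x ∈ E i} := by
    simpa using sum_card_eq_sum_biUnion_card E univ
  have h_second : ∑ i, ∑ j, #(E i ∩ E j) = ∑ x ∈ univ.biUnion E, #{i | x ∈ E i} ^ 2 := by
    have h_union : (univ : Finset (κ × κ)).biUnion (fun p => E p.1 ∩ E p.2) = univ.biUnion E := by
      ext x
      simp only [mem_biUnion, mem_univ, true_and, mem_inter, Prod.exists]
      exact ⟨fun ⟨i, _, hi, _⟩ => ⟨i, hi⟩, fun ⟨i, hi⟩ => ⟨i, i, hi, hi⟩⟩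
    rw [← Fintype.sum_prod_type' (f := fun i j => #(E i ∩ E j)), sum_card_eq_sum_biUnion_card,
      h_union]
    refine sum_congr rfl fun x _ => ?_
    rw [sq, ← card_product, ← filter_product]
    simp
  rw [h_first, h_second]
  exact sq_sum_le_card_mul_sum_sq

/-- For events of probability `1 / s` in a space of size `M`, the pairwise intersections of average
size `C * M / s ^ 2` would have `C = 1` under independence. -/
lemma le_card_biUnion_mul [DecidableEq Λ] [Fintype κ] [Nonempty κ] {E : κ → Finset Λ} {M s C : ℝ}
    (hM : 0 < M) (hE : ∀ i, #(E i) * s = M)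
    (hC : ∀ i, ∑ j, #(E i ∩ E j) * s ^ 2 ≤ M * (Fintype.card κ * C)) :
    M ≤ #(univ.biUnion E) * C := by
  set N : ℝ := (Fintype.card κ : ℝ)
  have hN : 0 < N := Nat.cast_pos.2 Fintype.card_pos
  have h_cauchy : (N * M) ^ 2 ≤ #(univ.biUnion E) * (N * (M * (N * C))) := calc
    (N * M) ^ 2 = (∑ i, (#(E i) : ℝ)) ^ 2 * s ^ 2 := by
      rw [← mul_pow, sum_mul]
      simp only [hE, sum_const, card_univ, nsmul_eq_mul, N]
    _ ≤ (#(univ.biUnion E) * ∑ i, ∑ j, (#(E i ∩ E j) : ℝ)) * s ^ 2 := by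
      gcongr
      exact_mod_cast sq_sum_card_le_card_biUnion_mul E
    _ = #(univ.biUnion E) * ∑ i, ∑ j, #(E i ∩ E j) * s ^ 2 := by
      simp only [mul_assoc, sum_mul]
    _ ≤ #(univ.biUnion E) * ∑ _i : κ, M * (N * C) := by
      gcongr with i
      exact hC i
    _ = #(univ.biUnion E) * (N * (M * (N * C))) := by
      rw [sum_const, card_univ, nsmul_eq_mul]
  refine le_of_mul_le_mul_left (a := N ^ 2 * M) ?_ (by positivity)
  linarith

variable [Fintype μ] [DecidableEq μ] [DecidableEq σ]

lemma pow_card_agree_sub_le (f f' : μ → σ) (e : ℕ) {q : ℝ} (hq : 0 ≤ q) :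
    q ^ (#{i | f i = f' i} - e) ≤
      1 + ∑ J : Finset μ with e < #J, if ∀ i ∈ J, f i = f' i then q ^ (#J - e) else 0 := by
  have h_nonneg : ∀ J ∈ ({J | e < #J} : Finset (Finset μ)),
      0 ≤ if ∀ i ∈ J, f i = f' i then q ^ (#J - e) else 0 := fun J _ => by
    split_ifs <;> positivity
  rcases le_or_gt #{i | f i = f' i} e with h_le | h_lt
  · rw [Nat.sub_eq_zero_of_le h_le, pow_zero]
    exact le_add_of_nonneg_right (sum_nonneg h_nonneg)
  · have h_single := single_le_sum h_nonneg (mem_filter.2 ⟨mem_univ _, h_lt⟩)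
    rw [if_pos (fun i hi => (mem_filter.1 hi).2)] at h_single
    linarith

variable [Fintype σ]

lemma card_filter_forall_mem_eq (f : μ → σ) (J : Finset μ) :
    #{f' : μ → σ | ∀ i ∈ J, f i = f' i} = Fintype.card σ ^ (Fintype.card μ - #J) := by
  have h_pi : ({f' | ∀ i ∈ J, f i = f' i} : Finset (μ → σ)) =
      Fintype.piFinset fun i => if i ∈ J then {f i} else univ := by
    ext f'
    simp only [mem_filter, mem_univ, true_and, Fintype.mem_piFinset]
    refine forall_congr' fun i => ?_
    by_cases hi : i ∈ J <;> simp [hi, eq_comm]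
  rw [h_pi, Fintype.card_piFinset, ← card_compl, ← prod_const, ← prod_subset (subset_univ Jᶜ)]
  · exact prod_congr rfl fun i hi => by rw [if_neg (mem_compl.1 hi), card_univ]
  · intro i _ hi
    rw [if_pos (by simpa using hi), card_singleton]

lemma sum_pow_card_agree_sub_le (f : μ → σ) (e : ℕ) {q δ : ℝ} (hq : 0 ≤ q) (hδ : 0 ≤ δ)
    (hqδ : ∀ s, 0 < s → e + s ≤ Fintype.card μ → q ^ s ≤ δ * Fintype.card σ ^ (e + s)) :
    ∑ f' : μ → σ, q ^ (#{i | f i = f' i} - e) ≤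
      (Fintype.card σ : ℝ) ^ Fintype.card μ * (1 + 2 ^ Fintype.card μ * δ) := by
  set b : ℝ := (Fintype.card σ : ℝ)
  set m := Fintype.card μ
  have h_term : ∀ J ∈ ({J | e < #J} : Finset (Finset μ)),
      b ^ (m - #J) * q ^ (#J - e) ≤ b ^ m * δ := by
    intro J hJ
    have heJ : e < #J := (mem_filter.1 hJ).2
    have hJm : #J ≤ m := card_le_univ J
    calc b ^ (m - #J) * q ^ (#J - e) ≤ b ^ (m - #J) * (δ * b ^ (e + (#J - e))) := by
          gcongr
          exact hqδ _ (by omega) (by omega)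
      _ = b ^ (m - #J + (e + (#J - e))) * δ := by rw [pow_add _ (m - #J)]; ring
      _ = b ^ m * δ := by congr 2; omega
  calc ∑ f' : μ → σ, q ^ (#{i | f i = f' i} - e)
      ≤ ∑ f' : μ → σ,
          (1 + ∑ J : Finset μ with e < #J, if ∀ i ∈ J, f i = f' i then q ^ (#J - e) else 0) :=
        sum_le_sum fun f' _ => pow_card_agree_sub_le f f' e hq
    _ = b ^ m + ∑ J : Finset μ with e < #J, b ^ (m - #J) * q ^ (#J - e) := by
        rw [sum_add_distrib, sum_comm]
        congr 1
        · simp [b, m]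
        · refine sum_congr rfl fun J _ => ?_
          rw [← sum_filter, sum_const, card_filter_forall_mem_eq, nsmul_eq_mul, Nat.cast_pow]
    _ ≤ b ^ m + #{J : Finset μ | e < #J} • (b ^ m * δ) := by
        gcongr
        exact sum_le_card_nsmul _ _ _ h_term
    _ ≤ b ^ m + 2 ^ m * (b ^ m * δ) := by
        rw [nsmul_eq_mul]
        gcongr
        exact_mod_cast (card_le_univ _).trans_eq (Fintype.card_finset)
    _ = b ^ m * (1 + 2 ^ m * δ) := by ring

lemma exists_ne_forall_mem_of_card_le [Fintype Λ] [Fintype κ] {P : κ → Finset Λ}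
    {η : ℝ} (hη : Fintype.card κ * η < 1 / 2) (hη0 : 0 ≤ η) (hΛ : 2 ≤ Fintype.card Λ)
    (hP : ∀ i, (Fintype.card Λ : ℝ) ≤ #(P i) * (1 + η)) (x₀ : Λ) : ∃ x ≠ x₀, ∀ i, x ∈ P i := by
  classical
  by_contra! h_none
  have h_cover : (univ : Finset Λ) ⊆ insert x₀ (univ.biUnion fun i => (P i)ᶜ) := fun x _ => by
    by_cases hx : x = x₀
    · simp [hx]
    · simpa [hx] using h_none x hx
  have h_card : Fintype.card Λ ≤ (∑ i, #(P i)ᶜ) + 1 :=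
    (card_le_card h_cover).trans <| (card_insert_le _ _).trans <| by gcongr; exact card_biUnion_le
  have h_compl : ∀ i, (#(P i)ᶜ : ℝ) ≤ η * Fintype.card Λ := fun i => by
    have h_add : (#(P i)ᶜ : ℝ) + #(P i) = Fintype.card Λ := by
      exact_mod_cast card_compl_add_card (P i)
    have h_le : (#(P i) : ℝ) ≤ Fintype.card Λ := by exact_mod_cast card_le_univ (P i)
    linarith [hP i, mul_le_mul_of_nonneg_left h_le hη0]
  have h_half : (Fintype.card Λ : ℝ) ≤ Fintype.card κ * η * Fintype.card Λ + 1 := calc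
    (Fintype.card Λ : ℝ) ≤ (∑ i, (#(P i)ᶜ : ℝ)) + 1 := by exact_mod_cast h_card
    _ ≤ (∑ _i : κ, η * Fintype.card Λ) + 1 := by gcongr with i; exact h_compl i
    _ = Fintype.card κ * η * Fintype.card Λ + 1 := by
        rw [sum_const, card_univ, nsmul_eq_mul, mul_assoc]
  have hΛ' : (2 : ℝ) ≤ Fintype.card Λ := by exact_mod_cast hΛ
  nlinarith

end Counting

section Transversal

variable {κ μ σ ι : Type*}

/-- The map `i ↦ (i, f i)`, whose image is the graph of `f`. -/
def graphEmbedding (f : μ → σ) : μ ↪ μ × σ :=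
  ⟨fun i => (i, f i), fun _ _ h => congrArg Prod.fst h⟩

lemma graphEmbedding_apply (f : μ → σ) (i : μ) : graphEmbedding f i = (i, f i) := rfl

variable [Fintype κ] [Fintype μ]

/-- The copy of the core `κ` together with the graph of `f` in a set of coordinates containing
disjoint copies of `κ` and of the blocks `{i} × σ`. -/
def transversal (φ : κ ⊕ μ × σ ↪ ι) (f : μ → σ) : Finset ι :=
  (univ.disjSum (univ.map (graphEmbedding f))).map φ

variable (φ : κ ⊕ μ × σ ↪ ι) (f f' : μ → σ)

lemma card_transversal : #(transversal φ f) = Fintype.card κ + Fintype.card μ := by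
  rw [transversal, card_map, card_disjSum, card_map, card_univ, card_univ]

lemma card_transversal_inter_transversal [DecidableEq σ] [DecidableEq ι] :
    #(transversal φ f ∩ transversal φ f') = Fintype.card κ + #{i | f i = f' i} := by
  classical
  have h_inter : transversal φ f ∩ transversal φ f' =
      (univ.disjSum (({i | f i = f' i} : Finset μ).map (graphEmbedding f))).map φ := by
    rw [transversal, transversal, ← map_inter]
    congr 1
    ext (k | ⟨i, j⟩)
    · simp
    · suffices f i = j ∧ f' i = j ↔ f i = f' i ∧ f i = j by simpa [graphEmbedding_apply]
      grind
  rw [h_inter, card_map, card_disjSum, card_map, card_univ]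

end Transversal

section LocalGroup

variable {F L U ι J : Type*} [Field F] [AddCommGroup L] [Module F L] [AddCommGroup U] [Module F U]
  [Fintype F] [Fintype L]

lemma card_filter_mem_eq_pow_finrank (W : Submodule F L) [DecidablePred (· ∈ W)] :
    #{l | l ∈ W} = Fintype.card F ^ finrank F W := by
  rw [← card_eq_pow_finrank, Fintype.card_subtype]

variable [FiniteDimensional F U] [Fintype ι]
  {α : U →ₗ[F] ι → F} {β : L →ₗ[F] ι → F} {t : ℕ}

open Classical in
/-- Cauchy–Schwarz for the subspaces `agreeOn α β (S j)`, whose dimensions and pairwise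
intersections are known. -/
lemma card_le_card_exists_mem_agreeOn_mul [DecidableEq ι] [Fintype J] [Nonempty J]
    (hα : IsMDS α) (hβα : IsMDS (β.coprod α)) {S : J → Finset ι}
    (hS : ∀ j, #(S j) = finrank F U + t)
    (h_union : ∀ i j, #(S i ∪ S j) ≤ finrank F L + finrank F U) {C : ℝ}
    (hC : ∀ i, ∑ j, (Fintype.card F : ℝ) ^ (#(S i ∩ S j) - finrank F U) ≤ Fintype.card J * C) :
    (Fintype.card L : ℝ) ≤ #{l : L | ∃ T, #T = finrank F U + t ∧ l ∈ agreeOn α β T} * C := by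
  set q : ℝ := (Fintype.card F : ℝ)
  set E : J → Finset L := fun j => {l | l ∈ agreeOn α β (S j)}
  have : 0 < q := Nat.cast_pos.2 Fintype.card_pos
  have hE_card (j : J) : (#(E j) : ℝ) * q ^ t = q ^ finrank F L := by
    have h_dim := finrank_agreeOn_add_card (S := S j) hα hβα (by rw [hS]; omega)
      (by simpa using h_union j j)
    rw [card_filter_mem_eq_pow_finrank, Nat.cast_pow, ← pow_add]
    congr 1
    have := hS j
    omega
  have hE_inter (i j : J) : (#(E i ∩ E j) : ℝ) * (q ^ t) ^ 2 =
      q ^ finrank F L * q ^ (#(S i ∩ S j) - finrank F U) := by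
    have h_inf : E i ∩ E j =
        ({l | l ∈ agreeOn α β (S i) ⊓ agreeOn α β (S j)} : Finset L) := by
      simp only [E, ← filter_and, Submodule.mem_inf]
    rw [h_inf, card_filter_mem_eq_pow_finrank, Nat.cast_pow, ← pow_mul', ← pow_add,
      finrank_agreeOn_inf_agreeOn hα hβα (hS i) (hS j) (h_union i j), pow_add]
  have hC_nonneg : 0 ≤ C := nonneg_of_mul_nonneg_right
    ((sum_nonneg fun j _ => by positivity).trans (hC (Classical.arbitrary J)))
    (Nat.cast_pos.2 Fintype.card_pos)
  have h_subset : univ.biUnion E ⊆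
      ({l | ∃ T, #T = finrank F U + t ∧ l ∈ agreeOn α β T} : Finset L) := by
    intro l hl
    obtain ⟨j, -, hj⟩ := mem_biUnion.1 hl
    exact mem_filter.2 ⟨mem_univ l, S j, hS j, (mem_filter.1 hj).2⟩
  calc (Fintype.card L : ℝ) = q ^ finrank F L := by
        rw [card_eq_pow_finrank (K := F), Nat.cast_pow]
    _ ≤ #(univ.biUnion E) * C := le_card_biUnion_mul (by positivity) hE_card fun i => by
        simp only [hE_inter, ← mul_sum]
        gcongr
        exact hC i
    _ ≤ _ := by gcongr

open Classical in
/-- Transversals of `e + t` blocks of size `b` with a common core of `finrank F U - e` coordinates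
share more than `finrank F U` coordinates only if they agree in more than `e` blocks. -/
lemma card_le_card_exists_mem_agreeOn_mul_of_pow_le {e b : ℕ} {δ : ℝ} (hα : IsMDS α)
    (hβα : IsMDS (β.coprod α)) (he : e ≤ finrank F U) (het : e + 2 * t ≤ finrank F L) (hb : 0 < b)
    (hι : (finrank F U + finrank F L) * b ≤ Fintype.card ι) (hδ : 0 ≤ δ)
    (hqδ : ∀ s, 0 < s → s ≤ t → (Fintype.card F : ℝ) ^ s ≤ δ * b ^ (e + s)) :
    (Fintype.card L : ℝ) ≤
      #{l : L | ∃ T, #T = finrank F U + t ∧ l ∈ agreeOn α β T} * (1 + 2 ^ (e + t) * δ) := by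
  have : NeZero b := ⟨hb.ne'⟩
  obtain ⟨φ⟩ := Function.Embedding.nonempty_of_card_le
    (α := Fin (finrank F U - e) ⊕ Fin (e + t) × Fin b) (β := ι) <| by
      simp only [Fintype.card_sum, Fintype.card_prod, Fintype.card_fin]
      nlinarith [Nat.sub_add_cancel he]
  have hS (f : Fin (e + t) → Fin b) : #(transversal φ f) = finrank F U + t := by
    rw [card_transversal, Fintype.card_fin, Fintype.card_fin]
    omega
  have hS_inter (f f' : Fin (e + t) → Fin b) : #(transversal φ f ∩ transversal φ f') =
      finrank F U - e + #{i | f i = f' i} := by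
    rw [card_transversal_inter_transversal, Fintype.card_fin]
  refine card_le_card_exists_mem_agreeOn_mul hα hβα (S := transversal φ) hS (fun f f' => ?_)
    fun f => ?_
  · have h_card := card_union_add_card_inter (transversal φ f) (transversal φ f')
    rw [hS, hS, hS_inter] at h_card
    omega
  · have h_sub (f' : Fin (e + t) → Fin b) :
        #(transversal φ f ∩ transversal φ f') - finrank F U = #{i | f i = f' i} - e := by
      rw [hS_inter]
      omega
    have h_sum := sum_pow_card_agree_sub_le f e (Nat.cast_nonneg (Fintype.card F)) hδ <| by
      simpa only [Fintype.card_fin, Nat.add_le_add_iff_left] using hqδ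
    simpa [h_sub] using h_sum

end LocalGroup

section MaximallyRecoverable

open Matrix

lemma eq_zero_of_forall_dotProduct_eq_zero {F κ ρ : Type*} [Field F] [Fintype κ] [Fintype ρ]
    {w : κ → ρ → F} (hw : LinearIndependent F w) (h_card : Fintype.card ρ ≤ Fintype.card κ)
    {z : ρ → F} (hz : ∀ k, w k ⬝ᵥ z = 0) : z = 0 := by
  have h_span : Submodule.span F (Set.range w) = ⊤ :=
    hw.span_eq_top_of_card_eq_finrank' <| le_antisymm hw.fintype_card_le_finrank (by simpa)
  have h_ker : ⊤ ≤ LinearMap.ker (dotProductBilin F F |>.flip z) := by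
    rw [← h_span, Submodule.span_le]
    rintro _ ⟨k, rfl⟩
    exact hz k
  exact dotProduct_eq_zero _ fun v => by
    rw [dotProduct_comm]
    exact h_ker (Submodule.mem_top (x := v))

lemma lrcParityCheck_dotProduct_elim {F : Type} [Field F] {g r a h : ℕ}
    (A : Fin g → Matrix (Fin a) (Fin r) F) (B : Fin g → Matrix (Fin h) (Fin r) F)
    (w : Fin g × Fin a → F) (l : Fin h → F) (i : Fin g) (c : Fin r) :
    (fun ρ => lrcParityCheck F g r a h A B ρ (i, c)) ⬝ᵥ Sum.elim w l =
      ((fun j => w (i, j)) ᵥ* A i) c + (l ᵥ* B i) c := by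
  simp [lrcParityCheck, dotProduct, vecMul, Fintype.sum_prod_type, mul_comm]

namespace IsMRLRC

variable {F : Type} [Field F] {g r a h t : ℕ} {A : Fin g → Matrix (Fin a) (Fin r) F}
  {B : Fin g → Matrix (Fin h) (Fin r) F}

lemma isMDS_local (hAB : IsMRLRC F g r a h A B) (har : a ≤ r) (i : Fin g) :
    IsMDS (A i).vecMulLinear where
  finrank_le_card := by simpa
  eq_zero_of_forall_mem {T} hT u hu := by
    obtain ⟨S, hST, hS⟩ := exists_subset_card_eq (n := a) (by simpa using hT)
    refine eq_zero_of_forall_dotProduct_eq_zero (hAB.1 i S hS) (by simp [hS]) fun c => ?_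
    rw [dotProduct_comm]
    exact hu c (hST c.2)

lemma eq_zero_of_forall_vecMul_eq (hAB : IsMRLRC F g r a h A B) {S : Fin g → Finset (Fin r)}
    (hS : ∀ i, a ≤ #(S i)) (hS_sum : a * g + h ≤ ∑ i, #(S i)) {u : Fin g → Fin a → F}
    {l : Fin h → F} (hul : ∀ i, ∀ c ∈ S i, (u i ᵥ* A i) c = (l ᵥ* B i) c) :
    l = 0 ∧ ∀ i, u i = 0 := by
  let cols (S : Fin g → Finset (Fin r)) : Finset (Fin g × Fin r) := {x | x.2 ∈ S x.1}
  have card_cols (S : Fin g → Finset (Fin r)) : #(cols S) = ∑ i, #(S i) := by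
    rw [card_filter, Fintype.sum_prod_type]
    exact sum_congr rfl fun i _ => by simp
  choose S₀ hS₀_sub hS₀ using fun i => exists_subset_card_eq (hS i)
  obtain ⟨E, hE_ge, hE_le, hE⟩ := exists_subsuperset_card_eq (s := cols S₀) (t := cols S)
    (n := a * g + h) (monotone_filter_right _ fun x _ hx => hS₀_sub _ hx)
    (by simp [card_cols, hS₀, mul_comm]) (by rwa [card_cols])
  have hE_group (i : Fin g) : a ≤ #{x ∈ E | x.1 = i} := by
    rw [← hS₀ i, ← card_map (Function.Embedding.sectR i (Fin r))]
    refine card_le_card fun x hx => ?_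
    obtain ⟨c, hc, rfl⟩ := mem_map.1 hx
    exact mem_filter.2 ⟨hE_ge (by simpa [cols] using hc), rfl⟩
  have hz : Sum.elim (fun p : Fin g × Fin a => -u p.1 p.2) l = 0 := by
    refine eq_zero_of_forall_dotProduct_eq_zero (hAB.2 E hE hE_group) ?_ fun ⟨⟨i, c⟩, hc⟩ => ?_
    · simp [hE, mul_comm]
    · have hc' := hul i c (by simpa [cols] using hE_le hc)
      rw [lrcParityCheck_dotProduct_elim, show (fun j => -u i j) = -u i from rfl, neg_vecMul,
        Pi.neg_apply, hc', neg_add_cancel]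
  refine ⟨funext fun j => congrFun hz (.inr j), fun i => funext fun j => ?_⟩
  simpa using congrFun hz (.inl (i, j))

lemma isMDS_heavy_coprod_local (hAB : IsMRLRC F g r a h A B) (har : a + h ≤ r) (i : Fin g) :
    IsMDS ((B i).vecMulLinear.coprod (A i).vecMulLinear) where
  finrank_le_card := by
    simp only [finrank_prod, finrank_fintype_fun_eq_card, Fintype.card_fin]
    omega
  eq_zero_of_forall_mem {T} hT := by
    rintro ⟨l, u⟩ hlu
    simp only [finrank_prod, finrank_fintype_fun_eq_card, Fintype.card_fin] at hT
    obtain ⟨S₀, -, hS₀⟩ := exists_subset_card_eq (s := (univ : Finset (Fin r))) (n := a)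
      (by rw [card_fin]; omega)
    choose v hv using fun j => (hAB.isMDS_local (by omega) j).exists_forall_mem_eq (S := S₀)
      (by simp [hS₀]) (l ᵥ* B j)
    have h_zero := hAB.eq_zero_of_forall_vecMul_eq (S := Function.update (fun _ => S₀) i T)
      (u := Function.update v i (-u)) (l := l) ?_ ?_ ?_
    · have hu := h_zero.2 i
      rw [Function.update_self, neg_eq_zero] at hu
      rw [h_zero.1, hu, Prod.mk_zero_zero]
    · intro j
      rcases eq_or_ne j i with rfl | hj
      · rw [Function.update_self]; omega
      · rw [Function.update_of_ne hj, hS₀]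
    · have h_sum : ∀ j ∈ univ.erase i, #(Function.update (fun _ => S₀) i T j) = a :=
        fun j hj => by rw [Function.update_of_ne (ne_of_mem_erase hj), hS₀]
      rw [← add_sum_erase _ _ (mem_univ i), sum_congr rfl h_sum, Function.update_self, sum_const,
        card_erase_of_mem (mem_univ i), card_fin, smul_eq_mul]
      obtain ⟨g, rfl⟩ := Nat.exists_eq_add_one.2 i.pos
      rw [Nat.add_sub_cancel]
      linarith
    · intro j c hc
      rcases eq_or_ne j i with rfl | hj
      · rw [Function.update_self] at hc ⊢
        rw [neg_vecMul, Pi.neg_apply]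
        exact neg_eq_of_add_eq_zero_left (hlu c hc)
      · rw [Function.update_of_ne hj] at hc ⊢
        exact hv j c hc

lemma eq_zero_of_forall_exists_mem_agreeOn (hAB : IsMRLRC F g r a h A B) (hgt : h ≤ g * t)
    {l : Fin h → F}
    (hl : ∀ i, ∃ S, #S = a + t ∧ l ∈ agreeOn (A i).vecMulLinear (B i).vecMulLinear S) : l = 0 := by
  choose S hS hlS using hl
  choose u hu using fun i => mem_agreeOn.1 (hlS i)
  refine (hAB.eq_zero_of_forall_vecMul_eq (fun i => by rw [hS]; omega) ?_ hu).1
  simp only [hS, sum_const, card_univ, Fintype.card_fin, smul_eq_mul]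
  linarith [mul_add g a t, mul_comm a g]

end IsMRLRC

lemma inv_four_mul_mul_two_pow_le_one {g : ℕ} (hg : 0 < g) (h : ℕ) :
    (4 * g * 2 ^ h : ℝ)⁻¹ ≤ 1 := by
  refine inv_le_one_of_one_le₀ ?_
  exact_mod_cast Nat.one_le_iff_ne_zero.2 (by positivity)

lemma pow_le_mul_pow_of_le_mul_rpow {q δ : ℝ} {b e s t : ℕ} (hq : 0 ≤ q) (hδ : 0 ≤ δ)
    (hδ_le : δ ≤ 1) (hb : 0 < b) (hs : 0 < s) (hst : s ≤ t)
    (h_le : q ≤ δ * (b : ℝ) ^ (1 + (e : ℝ) / t)) : q ^ s ≤ δ * (b : ℝ) ^ (e + s) := by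
  have hb_one : (1 : ℝ) ≤ b := by exact_mod_cast hb
  have hst' : (s : ℝ) / t ≤ 1 := div_le_one_of_le₀ (by exact_mod_cast hst) (Nat.cast_nonneg t)
  calc q ^ s ≤ (δ * (b : ℝ) ^ (1 + (e : ℝ) / t)) ^ s := by gcongr
    _ = δ ^ s * (b : ℝ) ^ ((1 + (e : ℝ) / t) * s) := by
      rw [mul_pow, Real.rpow_mul_natCast (Nat.cast_nonneg b)]
    _ ≤ δ * (b : ℝ) ^ ((e + s : ℕ) : ℝ) := by
      gcongr
      · exact pow_le_of_le_one hδ hδ_le hs.ne'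
      · push_cast
        linarith [mul_le_mul_of_nonneg_left hst' (Nat.cast_nonneg (α := ℝ) e),
          show (1 + (e : ℝ) / t) * s = s + e * (s / t) by ring]
    _ = δ * (b : ℝ) ^ (e + s) := by rw [Real.rpow_natCast]

namespace IsMRLRC

variable {F : Type} [Field F] [Fintype F] {g r a h t b : ℕ} {A : Fin g → Matrix (Fin a) (Fin r) F}
  {B : Fin g → Matrix (Fin h) (Fin r) F}

lemma mul_rpow_le_card_of_add_two_mul_le (hAB : IsMRLRC F g r a h A B) {e : ℕ} (he : e ≤ a)
    (het : e + 2 * t ≤ h) (ht : 0 < t) (hgt : h ≤ g * t) (hb : 0 < b) (hr : (a + h) * b ≤ r) :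
    (4 * g * 2 ^ h : ℝ)⁻¹ * (b : ℝ) ^ (1 + (e : ℝ) / t) ≤ Fintype.card F := by
  classical
  by_contra! h_lt
  set δ : ℝ := (4 * g * 2 ^ h : ℝ)⁻¹
  have hg : 0 < g := Nat.pos_of_mul_pos_right (show 0 < g * t by omega)
  have hδ_mul : g * (2 ^ h * δ) = 1 / 4 := by simp only [δ]; field_simp
  have hδ_le : δ ≤ 1 := inv_four_mul_mul_two_pow_le_one hg h
  have h_agree (i : Fin g) := card_le_card_exists_mem_agreeOn_mul_of_pow_le (t := t) (δ := δ)
    (hAB.isMDS_local (by nlinarith) i) (hAB.isMDS_heavy_coprod_local (by nlinarith) i)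
    (e := e) (by simpa) (by simpa) hb (by simpa) (by positivity) fun s hs hst =>
      pow_le_mul_pow_of_le_mul_rpow (by positivity) (by positivity) hδ_le hb hs hst h_lt.le
  have h_union : (Fintype.card (Fin g) : ℝ) * (2 ^ (e + t) * δ) < 1 / 2 := by
    have h_pow : (2 : ℝ) ^ (e + t) ≤ 2 ^ h := pow_le_pow_right₀ one_le_two (by omega)
    calc (Fintype.card (Fin g) : ℝ) * (2 ^ (e + t) * δ) ≤ g * (2 ^ h * δ) := by
          rw [Fintype.card_fin]
          gcongr
      _ < 1 / 2 := by rw [hδ_mul]; norm_num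
  have h_two : 2 ≤ Fintype.card (Fin h → F) := by
    rw [Fintype.card_fun, Fintype.card_fin]
    exact Fintype.one_lt_card.trans_le (Nat.le_self_pow (by omega) _)
  obtain ⟨l, hl, hl_agree⟩ :=
    exists_ne_forall_mem_of_card_le h_union (by positivity) h_two h_agree 0
  exact hl (hAB.eq_zero_of_forall_exists_mem_agreeOn hgt fun i => by simpa using hl_agree i)

lemma le_card_of_two_le (hAB : IsMRLRC F g r a h A B) (hg : 0 < g) (hh : 2 ≤ h)
    (hr : (a + h) * b ≤ r) : b ≤ Fintype.card F := by
  rcases Nat.eq_zero_or_pos b with rfl | hb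
  · exact Nat.zero_le _
  · have h_dim : finrank F ((Fin h → F) × (Fin a → F)) = h + a := by
      simp only [finrank_prod, finrank_fintype_fun_eq_card, Fintype.card_fin]
    have h_lt := (hAB.isMDS_heavy_coprod_local (by nlinarith) ⟨0, hg⟩).card_lt_card_add_finrank
      (by omega)
    rw [h_dim, Fintype.card_fin] at h_lt
    by_contra! h_gt
    nlinarith

lemma mul_rpow_le_card (hAB : IsMRLRC F g r a h A B) (ht : 0 < t) (hth : t < h) (hgt : h ≤ g * t)
    (hb : 0 < b) (hr : (a + h) * b ≤ r) :
    (4 * g * 2 ^ h : ℝ)⁻¹ * (b : ℝ) ^ (1 + min (a : ℝ) (h - 2 * t) / t) ≤ Fintype.card F := by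
  rcases le_or_gt (2 * t) h with h_le | h_lt
  · have h_min : min (a : ℝ) (h - 2 * t) = (min a (h - 2 * t) : ℕ) := by
      push_cast [h_le]
      rfl
    rw [h_min]
    exact hAB.mul_rpow_le_card_of_add_two_mul_le (min_le_left _ _)
      (by have := min_le_right a (h - 2 * t); omega) ht hgt hb hr
  · have hg : 0 < g := Nat.pos_of_mul_pos_right (show 0 < g * t by omega)
    have h_neg : (h : ℝ) - 2 * t ≤ 0 := by
      rw [sub_nonpos]
      exact_mod_cast h_lt.le
    have h_exp : 1 + min (a : ℝ) (h - 2 * t) / t ≤ 1 := by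
      linarith [div_nonpos_of_nonpos_of_nonneg ((min_le_right (a : ℝ) _).trans h_neg)
        (Nat.cast_nonneg (α := ℝ) t)]
    calc (4 * g * 2 ^ h : ℝ)⁻¹ * (b : ℝ) ^ (1 + min (a : ℝ) (h - 2 * t) / t)
        ≤ 1 * (b : ℝ) ^ (1 : ℝ) := by
          gcongr
          · exact inv_four_mul_mul_two_pow_le_one hg h
          · exact_mod_cast hb
      _ ≤ Fintype.card F := by
          rw [one_mul, Real.rpow_one]
          exact_mod_cast hAB.le_card_of_two_le hg (by omega) hr

end IsMRLRC

end MaximallyRecoverable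

lemma mul_rpow_div_le_of_forall_mul_le {K r : ℕ} {δ γ Q : ℝ} (hK : 0 < K) (hδ : 0 ≤ δ)
    (hγ : 0 ≤ γ) (hδQ : δ ≤ Q) (hQ : ∀ b : ℕ, 0 < b → K * b ≤ r → δ * (b : ℝ) ^ γ ≤ Q) :
    δ * ((r : ℝ) / (2 * K)) ^ γ ≤ Q := by
  have hK_pos : (0 : ℝ) < 2 * K := by positivity
  rcases lt_or_ge r K with hr | hr
  · have h_le_one : ((r : ℝ) / (2 * K)) ^ γ ≤ 1 := Real.rpow_le_one (by positivity)
      (div_le_one_of_le₀ (by exact_mod_cast (by omega : r ≤ 2 * K)) hK_pos.le) hγ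
    exact (mul_le_of_le_one_right hδ h_le_one).trans hδQ
  · have hb : 0 < r / K := Nat.div_pos hr hK
    have hr_le : r ≤ 2 * K * (r / K) := by nlinarith [Nat.lt_mul_div_succ r hK]
    have h_base : (r : ℝ) / (2 * K) ≤ (r / K : ℕ) := by
      rw [div_le_iff₀' hK_pos]
      exact_mod_cast hr_le
    calc δ * ((r : ℝ) / (2 * K)) ^ γ ≤ δ * ((r / K : ℕ) : ℝ) ^ γ := by gcongr
      _ ≤ Q := hQ _ hb (Nat.mul_div_le r K)

lemma one_add_min_div_eq {a h t : ℕ} (ht : 0 < t) (ha : (h : ℤ) - 2 * t ≤ a) :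
    1 + min (a : ℝ) (h - 2 * t) / t = h / t - 1 := by
  rw [min_eq_right (by exact_mod_cast ha)]
  field_simp
  ring

lemma ceilDiv_pos_and_lt_and_le_mul {g h : ℕ} (hg : 2 ≤ g) (hgh : g ≤ h) :
    0 < (h + g - 1) / g ∧ (h + g - 1) / g < h ∧ h ≤ g * ((h + g - 1) / g) :=
  ⟨Nat.div_pos (by omega) (by omega), Nat.div_lt_of_lt_mul
    (by nlinarith [Nat.sub_add_cancel (by omega : 1 ≤ h + g)]), le_smul_ceilDiv (by omega : 0 < g)⟩

theorem mrlrc_field_size_lower_bound_few_groups_large_a_general (a g h t : ℕ) (ht : 0 < t)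
    (hth : t < h) (hgt : h ≤ g * t) :
    ∃ c : ℝ, 0 < c ∧ ∀ q n : ℕ, g ∣ n → ExistsMRLRC g (n / g) h a q →
      c * (n : ℝ) ^ (1 + min (a : ℝ) (h - 2 * t) / t) ≤ (q : ℝ) := by
  set γ : ℝ := 1 + min (a : ℝ) (h - 2 * t) / t
  have hg : 0 < g := Nat.pos_of_mul_pos_right (show 0 < g * t by omega)
  have hγ : 0 ≤ γ := by
    have ht' : (0 : ℝ) < t := by exact_mod_cast ht
    have hth' : (t : ℝ) < h := by exact_mod_cast hth
    have h_min : -(t : ℝ) ≤ min (a : ℝ) (h - 2 * t) :=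
      le_min (by linarith [Nat.cast_nonneg (α := ℝ) a]) (by linarith)
    have h_div : -1 ≤ min (a : ℝ) (h - 2 * t) / t := by rwa [le_div_iff₀ ht', neg_one_mul]
    linarith
  have hK : 0 < a + h := by omega
  refine ⟨(4 * g * 2 ^ h : ℝ)⁻¹ * (1 / (g * (2 * (a + h : ℕ)))) ^ γ, by positivity, ?_⟩
  rintro q _ ⟨r, rfl⟩ h_exists
  rw [Nat.mul_div_cancel_left r hg] at h_exists
  obtain ⟨F, _, _, rfl, A, B, hAB⟩ := h_exists
  have h_one_le : (1 : ℝ) ≤ Fintype.card F := by exact_mod_cast Fintype.card_pos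
  have h_bound := mul_rpow_div_le_of_forall_mul_le hK (by positivity) hγ
    ((inv_four_mul_mul_two_pow_le_one hg h).trans h_one_le)
    fun b hb hr => hAB.mul_rpow_le_card ht hth hgt hb hr
  rw [mul_assoc, ← Real.mul_rpow (by positivity) (by positivity)]
  convert h_bound using 3
  push_cast
  field_simp

/-- **Proposition A.2.** Fix `a ≥ 0` and `h ≥ g ≥ 2` with `a ≥ h - 2⌈h/g⌉`. There is a
constant `c > 0` (depending only on `a, g, h`) such that every maximally recoverable
`(n, n/g, h, a, q)`-LRC with `g` local groups each of size `r = n/g` satisfies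
`q ≥ c · n^(h/⌈h/g⌉ - 1)`.  (Here `⌈h/g⌉ = (h + g - 1) / g` in natural division.) -/
theorem mrlrc_field_size_lower_bound_few_groups_large_a
    (a g h : ℕ) (hg : 2 ≤ g) (hgh : g ≤ h)
    (ha : (h : ℤ) - 2 * (((h + g - 1) / g : ℕ) : ℤ) ≤ (a : ℤ)) :
    ∃ c : ℝ, 0 < c ∧
      ∀ q n : ℕ, IsPrimePow q → g ∣ n →
        ExistsMRLRC g (n / g) h a q →
        c * (n : ℝ) ^ ((h : ℝ) / (((h + g - 1) / g : ℕ) : ℝ) - 1) ≤ (q : ℝ) := by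
  obtain ⟨ht, hth, hgt⟩ := ceilDiv_pos_and_lt_and_le_mul hg hgh
  obtain ⟨c, hc, h_bound⟩ :=
    mrlrc_field_size_lower_bound_few_groups_large_a_general a g h _ ht hth hgt
  exact ⟨c, hc, fun q n _ => one_add_min_div_eq ht ha ▸ h_bound q n⟩
end

section
/- Let F be a field, let a ≥ 0 and h ≥ 1 be integers, let C_1,…,C_h be a×(a+1) matrices over F, and let D_1,…,D_h be h×(a+1) matrices over F, with D_i^{(j)} denoting the j-th row of D_i. Then the determinant of the (ah+h)×(ah+h) block matrix whose first ah rows contain C_1,…,C_h in block-diagonal position and whose last h rows are [D_1 | D_2 | ⋯ | D_h] equals (−1)^{ah(h−1)/2} times the determinant of the h×h matrix whose (j, i) entry is det of the (a+1)×(a+1) matrix obtained by appending the row D_i^{(j)} below C_i. -/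
/-!
Let `c i` be the vector of signed maximal minors of `C i`, so that `det [C i; d] = d ⬝ᵥ c i` for
every row `d`, and hence `C i *ᵥ c i = 0`. In the big matrix, replace the last column of each column
block by the combination of all columns of the block with coefficients `c i`: this multiplies the
determinant by `∏ i, δ i`, where `δ i` is the minor on the first `a` columns of `C i`. The result is
block triangular; one diagonal block has determinant `∏ i, δ i` and the other is the matrix of the
`det [C i; D i j]`. The factor `∏ i, δ i` may be zero, but becomes a monic polynomial, hence
cancellable, once the indeterminate `X` is added to the diagonal of each `C i`; then put `X = 0`.

The sign belongs to the permutation moving each heavy row to the end of the corresponding row block: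
its inversions are the pairs formed by the `j`-th heavy row and a row of a block `i > j`.
-/

namespace HeavyRows

open Matrix Polynomial

section SignedMinors

variable {R : Type*} {a : ℕ}

/-- The matrix `[C; d]`, with `d` as its last row. -/
def appendRow {n : Type*} (C : Matrix (Fin a) n R) (d : n → R) : Matrix (Fin (a + 1)) n R :=
  of (Fin.snoc (fun k => C k) d)

@[simp]
theorem appendRow_castSucc {n : Type*} (C : Matrix (Fin a) n R) (d : n → R) (k : Fin a) :
    appendRow C d k.castSucc = C k :=
  Fin.snoc_castSucc (α := fun _ => n → R) _ _ _

@[simp]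
theorem appendRow_last {n : Type*} (C : Matrix (Fin a) n R) (d : n → R) :
    appendRow C d (Fin.last a) = d :=
  Fin.snoc_last (α := fun _ => n → R) _ _

theorem map_appendRow {S n : Type*} (f : R → S) (C : Matrix (Fin a) n R) (d : n → R) :
    (appendRow C d).map f = appendRow (C.map f) (f ∘ d) := by
  ext k l
  induction k using Fin.lastCases <;> simp

variable [CommRing R]

/-- The vector of signed maximal minors of an `a × (a + 1)` matrix: the cofactors along a row
appended at the bottom. -/
def signedMinors (C : Matrix (Fin a) (Fin (a + 1)) R) (l : Fin (a + 1)) : R :=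
  (-1) ^ (a + l : ℕ) * (C.submatrix id l.succAbove).det

theorem signedMinors_last (C : Matrix (Fin a) (Fin (a + 1)) R) :
    signedMinors C (Fin.last a) = (C.submatrix id Fin.castSucc).det := by
  simp [signedMinors, Fin.succAbove_last]

theorem det_appendRow (C : Matrix (Fin a) (Fin (a + 1)) R) (d : Fin (a + 1) → R) :
    (appendRow C d).det = d ⬝ᵥ signedMinors C := by
  have minor_eq (l : Fin (a + 1)) :
      (appendRow C d).submatrix Fin.castSucc l.succAbove = C.submatrix id l.succAbove := by
    ext; simp
  rw [det_succ_row _ (Fin.last a), dotProduct]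
  refine Finset.sum_congr rfl fun l _ => ?_
  rw [Fin.succAbove_last, minor_eq, appendRow_last, Fin.val_last, signedMinors]
  ring

theorem row_dotProduct_signedMinors (C : Matrix (Fin a) (Fin (a + 1)) R) (k : Fin a) :
    C k ⬝ᵥ signedMinors C = 0 := by
  rw [← det_appendRow]
  exact det_zero_of_row_eq k.castSucc_lt_last.ne (by simp)

end SignedMinors

section BlockMatrix

/-- The matching of the rows of the big matrix with its columns for which the `i`-th heavy row is
the last row of the `i`-th row block. -/
def sumEquivProdSucc (ι : Type*) (a : ℕ) : (ι × Fin a) ⊕ ι ≃ ι × Fin (a + 1) where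
  toFun := Sum.elim (fun p => (p.1, p.2.castSucc)) (fun i => (i, Fin.last a))
  invFun p := Fin.lastCases (motive := fun _ => (ι × Fin a) ⊕ ι) (Sum.inr p.1)
    (fun k => Sum.inl (p.1, k)) p.2
  left_inv := by rintro (⟨i, k⟩ | i) <;> simp
  right_inv := by
    rintro ⟨i, k⟩
    induction k using Fin.lastCases <;> simp

@[simp]
theorem sumEquivProdSucc_inl {ι : Type*} {a : ℕ} (p : ι × Fin a) :
    sumEquivProdSucc ι a (Sum.inl p) = (p.1, p.2.castSucc) :=
  rfl

@[simp]
theorem sumEquivProdSucc_inr {ι : Type*} {a : ℕ} (i : ι) :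
    sumEquivProdSucc ι a (Sum.inr i) = (i, Fin.last a) :=
  rfl

variable {ι : Type*} [DecidableEq ι] {R : Type*} {a : ℕ}

/-- The block matrix whose first rows carry the `C i` in block-diagonal position and whose last rows
(the heavy rows) are those of the `D i` placed side by side. -/
def heavyRows [Zero R] {m n ν : Type*} (C : ι → Matrix m n R) (D : ι → Matrix ν n R) :
    Matrix ((ι × m) ⊕ ν) (ι × n) R :=
  of fun ρ c =>
    Sum.elim (fun p : ι × m => if p.1 = c.1 then C p.1 p.2 c.2 else 0) (fun j => D c.1 j c.2) ρ

theorem map_heavyRows {S m n ν : Type*} [NonAssocSemiring R] [NonAssocSemiring S] (f : R →+* S)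
    (C : ι → Matrix m n R) (D : ι → Matrix ν n R) :
    (heavyRows C D).map f = heavyRows (fun i => (C i).map f) (fun i => (D i).map f) := by
  ext (p | j) c <;> simp [heavyRows, apply_ite f]

variable [Fintype ι] [CommRing R]

/-- The matrix of the column operation which replaces the last column of each column block `i` by
the combination of the columns of the block with coefficients `signedMinors (C i)`. The new columns
are indexed by `ι`, the unchanged ones by `ι × Fin a`. -/
def clearingMatrix (C : ι → Matrix (Fin a) (Fin (a + 1)) R) :
    Matrix (ι × Fin (a + 1)) ((ι × Fin a) ⊕ ι) R :=
  of fun p => Sum.elim (fun q => if p = (q.1, q.2.castSucc) then 1 else 0)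
    (fun i => if p.1 = i then signedMinors (C i) p.2 else 0)

theorem det_clearingMatrix (C : ι → Matrix (Fin a) (Fin (a + 1)) R) :
    ((clearingMatrix C).submatrix (sumEquivProdSucc ι a) id).det =
      ∏ i, ((C i).submatrix id Fin.castSucc).det := by
  have triangular : (clearingMatrix C).submatrix (sumEquivProdSucc ι a) id =
      fromBlocks 1 (of fun p i => clearingMatrix C (p.1, p.2.castSucc) (Sum.inr i)) 0
        (diagonal fun i => signedMinors (C i) (Fin.last a)) := by
    ext (p | i) (q | j)
    · simp [clearingMatrix, one_apply, Prod.ext_iff]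
    · rfl
    · simp [clearingMatrix, (Fin.castSucc_lt_last _).ne']
    · by_cases hij : i = j <;> simp [clearingMatrix, hij]
  rw [triangular, det_fromBlocks_zero₂₁, det_one, one_mul, det_diagonal]
  simp only [signedMinors_last]

theorem det_heavyRows_mul_clearingMatrix (C : ι → Matrix (Fin a) (Fin (a + 1)) R)
    (D : ι → Matrix ι (Fin (a + 1)) R) :
    (heavyRows C D * clearingMatrix C).det =
      (∏ i, ((C i).submatrix id Fin.castSucc).det) *
        (of fun j i => (appendRow (C i) (D i j)).det).det := by
  have triangular : heavyRows C D * clearingMatrix C =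
      fromBlocks ((blockDiagonal fun i => (C i).submatrix id Fin.castSucc).submatrix
          (Equiv.prodComm _ _) (Equiv.prodComm _ _)) 0
        (of fun j p => D p.1 j p.2.castSucc)
        (of fun j i => (appendRow (C i) (D i j)).det) := by
    ext (⟨i, k⟩ | j) (⟨i', k'⟩ | i')
    · by_cases hi : i = i' <;>
        simp [mul_apply, heavyRows, clearingMatrix, blockDiagonal_apply, hi]
    · have orthogonal := row_dotProduct_signedMinors (C i) k
      rw [dotProduct] at orthogonal
      by_cases hi : i = i'
      · subst hi
        simpa [mul_apply, heavyRows, clearingMatrix, Fintype.sum_prod_type] using orthogonal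
      · simp [mul_apply, heavyRows, clearingMatrix, Fintype.sum_prod_type, hi]
    · simp [mul_apply, heavyRows, clearingMatrix]
    · simp [mul_apply, heavyRows, clearingMatrix, det_appendRow, Fintype.sum_prod_type, dotProduct]
  rw [triangular, det_fromBlocks_zero₁₂, det_submatrix_equiv_self, det_blockDiagonal]

theorem det_heavyRows_of_isRegular (C : ι → Matrix (Fin a) (Fin (a + 1)) R)
    (D : ι → Matrix ι (Fin (a + 1)) R)
    (hC : ∀ i, IsRegular ((C i).submatrix id Fin.castSucc).det) :
    ((heavyRows C D).submatrix id (sumEquivProdSucc ι a)).det =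
      (of fun j i => (appendRow (C i) (D i j)).det).det := by
  have hprod : IsRegular (∏ i, ((C i).submatrix id Fin.castSucc).det) :=
    .prod fun i _ => hC i
  apply hprod.left
  calc (∏ i, ((C i).submatrix id Fin.castSucc).det) *
        ((heavyRows C D).submatrix id (sumEquivProdSucc ι a)).det
      = ((heavyRows C D).submatrix id (sumEquivProdSucc ι a)).det *
          ((clearingMatrix C).submatrix (sumEquivProdSucc ι a) id).det := by
        rw [det_clearingMatrix, mul_comm]
    _ = (heavyRows C D * clearingMatrix C).det := by
        rw [← det_mul, submatrix_mul_equiv, submatrix_id_id]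
    _ = _ := det_heavyRows_mul_clearingMatrix C D

/-- The matrix `C + X • [1 | 0]`, whose leading minor is a monic polynomial. -/
noncomputable def addXDiagonal (C : Matrix (Fin a) (Fin (a + 1)) R) :
    Matrix (Fin a) (Fin (a + 1)) R[X] :=
  of fun k l => (if k.castSucc = l then X else 0) + Polynomial.C (C k l)

theorem monic_det_addXDiagonal (C : Matrix (Fin a) (Fin (a + 1)) R) :
    ((addXDiagonal C).submatrix id Fin.castSucc).det.Monic := by
  have submatrix_eq : (addXDiagonal C).submatrix id Fin.castSucc =
      (X : R[X]) • 1 + (C.submatrix id Fin.castSucc).map Polynomial.C := by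
    ext1 k l
    simp [addXDiagonal, one_apply]
  rw [submatrix_eq]
  exact leadingCoeff_det_X_one_add_C _

theorem map_eval_zero_addXDiagonal (C : Matrix (Fin a) (Fin (a + 1)) R) :
    (addXDiagonal C).map (evalRingHom 0) = C := by
  ext k l
  by_cases hkl : k.castSucc = l <;> simp [addXDiagonal, hkl]

theorem det_heavyRows (C : ι → Matrix (Fin a) (Fin (a + 1)) R)
    (D : ι → Matrix ι (Fin (a + 1)) R) :
    ((heavyRows C D).submatrix id (sumEquivProdSucc ι a)).det =
      (of fun j i => (appendRow (C i) (D i j)).det).det := by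
  have generic := congrArg (evalRingHom (0 : R)) <|
    det_heavyRows_of_isRegular (fun i => addXDiagonal (C i)) (fun i => (D i).map Polynomial.C)
      fun i => (monic_det_addXDiagonal (C i)).isRegular
  have eval_D (i : ι) : ((D i).map Polynomial.C).map (evalRingHom (0 : R)) = D i := by
    ext; simp
  have eval_rhs : (of fun j i =>
        (appendRow (addXDiagonal (C i)) ((D i).map Polynomial.C j)).det).map (evalRingHom (0 : R)) =
      of fun j i => (appendRow (C i) (D i j)).det := by
    ext j i
    rw [map_apply, of_apply, of_apply, RingHom.map_det, RingHom.mapMatrix_apply, map_appendRow,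
      map_eval_zero_addXDiagonal]
    exact congrArg (fun d => (appendRow (C i) d).det) (congrFun (eval_D i) j)
  simpa only [RingHom.map_det, RingHom.mapMatrix_apply, ← submatrix_map, map_heavyRows, eval_D,
    map_eval_zero_addXDiagonal, eval_rhs] using generic

end BlockMatrix

section Sign

open Equiv

theorem sign_symm_trans_eq_prod {α : Type*} [Fintype α] {N : ℕ} (r s : α ≃ Fin N) :
    Perm.sign (r.symm.trans s) = ∏ x, ∏ y, if r x < r y ∧ s y < s x then -1 else 1 := by
  simp only [Perm.sign_eq_prod_prod_Ioi, ← Finset.filter_lt_eq_Ioi, Finset.prod_filter]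
  rw [← Equiv.prod_comp r]
  refine Finset.prod_congr rfl fun x _ => ?_
  rw [← Equiv.prod_comp r]
  refine Finset.prod_congr rfl fun y _ => ?_
  rcases lt_trichotomy (s x) (s y) with hxy | hxy | hxy
  · simp [hxy, hxy.not_gt]
  · simp [s.injective hxy]
  · simp [hxy, hxy.not_gt]

theorem det_submatrix_symm_symm {α β γ R : Type*} [Fintype α] [DecidableEq α] [Fintype γ]
    [DecidableEq γ] [CommRing R] (M : Matrix α β R) (r : α ≃ γ) (c : β ≃ γ) (e : α ≃ β) :
    (M.submatrix r.symm c.symm).det =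
      Perm.sign (r.symm.trans (e.trans c)) * (M.submatrix id e).det := by
  rw [← det_submatrix_equiv_self (e.trans c).symm, ← det_permute]
  congr 1
  ext x y
  simp

theorem finProdFinEquiv_lt_finProdFinEquiv {m n : ℕ} {p q : Fin m × Fin n} :
    finProdFinEquiv p < finProdFinEquiv q ↔ p.1 < q.1 ∨ p.1 = q.1 ∧ p.2 < q.2 := by
  simp only [Fin.lt_def, finProdFinEquiv_apply_val]
  rcases lt_trichotomy p.1 q.1 with hlt | heq | hgt
  · have block_le : n * (p.1 + 1) ≤ n * q.1 := Nat.mul_le_mul_left _ hlt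
    grind
  · simp [heq]
  · have block_le : n * (q.1 + 1) ≤ n * p.1 := Nat.mul_le_mul_left _ hgt
    grind

/-- The order of the rows of `heavyRows C D`: the row blocks one after the other, then the heavy
rows. -/
def rowOrder (a h : ℕ) : (Fin h × Fin a) ⊕ Fin h ≃ Fin (a * h + h) :=
  (sumCongr finProdFinEquiv (Equiv.refl (Fin h))).trans
    (finSumFinEquiv.trans (finCongr (by ring)))

/-- The order of the columns of `heavyRows C D`: the column blocks one after the other. -/
def colOrder (a h : ℕ) : Fin h × Fin (a + 1) ≃ Fin (a * h + h) :=
  finProdFinEquiv.trans (finCongr (by ring))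

theorem colOrder_lt_colOrder {a h : ℕ} {p q : Fin h × Fin (a + 1)} :
    colOrder a h p < colOrder a h q ↔ p.1 < q.1 ∨ p.1 = q.1 ∧ p.2 < q.2 :=
  finProdFinEquiv_lt_finProdFinEquiv

theorem rowOrder_inl_lt_inl {a h : ℕ} {p q : Fin h × Fin a} :
    rowOrder a h (Sum.inl p) < rowOrder a h (Sum.inl q) ↔ p.1 < q.1 ∨ p.1 = q.1 ∧ p.2 < q.2 :=
  finProdFinEquiv_lt_finProdFinEquiv

theorem rowOrder_inl_lt_inr {a h : ℕ} (p : Fin h × Fin a) (j : Fin h) :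
    rowOrder a h (Sum.inl p) < rowOrder a h (Sum.inr j) := by
  have inl_lt := (finProdFinEquiv p).isLt
  simp only [rowOrder, trans_apply, sumCongr_apply, Sum.map_inl, Sum.map_inr,
    finSumFinEquiv_apply_left, finSumFinEquiv_apply_right, Fin.lt_def, finCongr_apply, Fin.val_cast,
    Fin.val_castAdd, Fin.val_natAdd]
  lia

theorem rowOrder_inr_lt_inr {a h : ℕ} {i j : Fin h} :
    rowOrder a h (Sum.inr i) < rowOrder a h (Sum.inr j) ↔ i < j := by
  simp [rowOrder]

theorem rowOrder_lt_and_colOrder_lt_iff {a h : ℕ} (x y : (Fin h × Fin a) ⊕ Fin h) :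
    rowOrder a h x < rowOrder a h y ∧
        colOrder a h (sumEquivProdSucc _ a y) < colOrder a h (sumEquivProdSucc _ a x) ↔
      ∃ p j, x = Sum.inl p ∧ y = Sum.inr j ∧ j < p.1 := by
  rcases x with p | i <;> rcases y with q | j
  · simp only [rowOrder_inl_lt_inl, colOrder_lt_colOrder, sumEquivProdSucc_inl]
    grind
  · simp [rowOrder_inl_lt_inr, colOrder_lt_colOrder, (Fin.castSucc_lt_last _).not_gt]
  · simp [(rowOrder_inl_lt_inr _ _).not_gt]
  · simp only [rowOrder_inr_lt_inr, colOrder_lt_colOrder, sumEquivProdSucc_inr]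
    grind

theorem sign_rowOrder_colOrder (a h : ℕ) :
    Perm.sign ((rowOrder a h).symm.trans ((sumEquivProdSucc (Fin h) a).trans (colOrder a h))) =
      (-1) ^ (a * h * (h - 1) / 2) := by
  have inversions (i : Fin h) : ∏ j, (if j < i then -1 else 1 : ℤˣ) = (-1) ^ (i : ℕ) := by
    rw [← Finset.prod_filter, Finset.prod_const, Finset.filter_gt_eq_Iio, Fin.card_Iio]
  calc _ = ∏ i : Fin h, (∏ j, (if j < i then -1 else 1 : ℤˣ)) ^ a := by
        simp [sign_symm_trans_eq_prod, rowOrder_lt_and_colOrder_lt_iff, Fintype.prod_sum_type,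
          Fintype.prod_prod_type]
    _ = (-1) ^ ((∑ i : Fin h, (i : ℕ)) * a) := by
        simp only [inversions]
        rw [Finset.prod_pow, Finset.prod_pow_eq_pow_sum, pow_mul]
    _ = (-1) ^ (a * h * (h - 1) / 2) := by
        rw [Fin.sum_univ_eq_sum_range (fun i => i), Finset.sum_range_id, mul_comm, mul_assoc,
          Nat.mul_div_assoc _ (Nat.even_mul_pred_self h).two_dvd]

end Sign

end HeavyRows

open HeavyRows Matrix in
theorem det_blockdiag_with_heavy_rows_general {R : Type*} [CommRing R] (a h : ℕ)
    (C : Fin h → Matrix (Fin a) (Fin (a + 1)) R) (D : Fin h → Matrix (Fin h) (Fin (a + 1)) R) :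
    ((heavyRows C D).submatrix (rowOrder a h).symm (colOrder a h).symm).det =
      (-1) ^ (a * h * (h - 1) / 2) * (of fun j i => (appendRow (C i) (D i j)).det).det := by
  rw [det_submatrix_symm_symm _ _ _ (sumEquivProdSucc (Fin h) a), sign_rowOrder_colOrder,
    det_heavyRows]
  simp

/-- **Lemma 4.1 (determinantal identity).** For `a × (a+1)` matrices `C 1, …, C h` and
`h × (a+1)` matrices `D 1, …, D h`, the determinant of the `(ah+h) × (ah+h)` block matrix
with `C 1, …, C h` in block-diagonal position (row block `i` of height `a`, column block
`i` of width `a+1`) and last `h` rows `[D 1 | ⋯ | D h]` equals `(-1)^(ah(h-1)/2)` times the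
determinant of the `h × h` matrix whose `(j, i)` entry is `det [C i; (D i)^(j)]`, the
determinant of `C i` with the `j`-th row of `D i` appended at the bottom. -/
theorem det_blockdiag_with_heavy_rows
    (F : Type) [Field F] (a h : ℕ) (hh : 1 ≤ h)
    (C : Fin h → Matrix (Fin a) (Fin (a + 1)) F)
    (D : Fin h → Matrix (Fin h) (Fin (a + 1)) F) :
    (((Matrix.of fun (ρ : (Fin h × Fin a) ⊕ Fin h) (c : Fin h × Fin (a + 1)) =>
          Sum.elim (fun p : Fin h × Fin a => if p.1 = c.1 then C p.1 p.2 c.2 else 0)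
            (fun j : Fin h => D c.1 j c.2) ρ)).submatrix
        (((Equiv.sumCongr finProdFinEquiv (Equiv.refl (Fin h))).trans
            (finSumFinEquiv.trans (finCongr (by ring)))).symm :
          Fin (a * h + h) ≃ (Fin h × Fin a) ⊕ Fin h)
        ((finProdFinEquiv.trans (finCongr (by ring))).symm :
          Fin (a * h + h) ≃ Fin h × Fin (a + 1))).det
      = (-1 : F) ^ (a * h * (h - 1) / 2) *
        (Matrix.of fun j i : Fin h =>
          (Matrix.of (Fin.snoc (fun k : Fin a => C i k) (D i j)) :
            Matrix (Fin (a + 1)) (Fin (a + 1)) F).det).det :=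
  det_blockdiag_with_heavy_rows_general a h C D
end
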